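/- arXiv:2201.00847 — 4 statements merged into one kernel-verified Lean document; each statement's English description precedes it below -/
import Mathlib

section
/- Let R be a Noetherian local ring, n a positive integer, and M a non-zero finite R-module with grade_R(M) > n. Then T_n^C(M) = Tr_C(Ω^{n-1}M) is not a G_C-perfect R-module, and grade_R(T_n^C(M)) = 0. -/
open CategoryTheory TensorProduct

noncomputable section

universe u

variable (R : Type u) [CommRing R]

/-- The `i`-th Ext module `Ext_R^i(M, N)`. -/
def ExtM (M N : ModuleCat.{u} R) (i : ℕ) : ModuleCat.{u} R :=
  ((Ext R (ModuleCat.{u} R) i).obj (Opposite.op M)).obj N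

/-- The `i`-th Tor module `Tor_i^R(M, N)`. -/
def TorM (M N : ModuleCat.{u} R) (i : ℕ) : ModuleCat.{u} R :=
  ((Tor (ModuleCat.{u} R) i).obj M).obj N

/-- The biduality (evaluation) map `M → Hom_R(Hom_R(M, C), C)`. -/
def bidualityMap (C M : ModuleCat.{u} R) :
    ↥M →ₗ[R] ((↥M →ₗ[R] ↥C) →ₗ[R] ↥C) :=
  (LinearMap.id : (↥M →ₗ[R] ↥C) →ₗ[R] (↥M →ₗ[R] ↥C)).flip

/-- `C` is a semidualizing `R`-module. -/
def IsSemidualizing (C : ModuleCat.{u} R) : Prop :=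
  Module.Finite R ↥C ∧
  Function.Bijective (fun r : R => (r • LinearMap.id : ↥C →ₗ[R] ↥C)) ∧
  ∀ i : ℕ, 0 < i → Subsingleton (ExtM R C C i)

/-- `M` is totally `C`-reflexive. -/
def IsTotallyCReflexive (C M : ModuleCat.{u} R) : Prop :=
  Module.Finite R ↥M ∧
  Function.Bijective (bidualityMap R C M) ∧
  (∀ i : ℕ, 0 < i → Subsingleton (ExtM R M C i)) ∧
  (∀ i : ℕ, 0 < i → Subsingleton (ExtM R (ModuleCat.of R (↥M →ₗ[R] ↥C)) C i))

/-- `G_C`-dimension of `M` is at most `n`: there is an exact sequence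
`0 → X_n → ⋯ → X_0 → M → 0` with each `X_i` totally `C`-reflexive. -/
def gcdimLE (C : ModuleCat.{u} R) : ℕ → ModuleCat.{u} R → Prop
  | 0, M => IsTotallyCReflexive R C M
  | n+1, M => ∃ (X K : ModuleCat.{u} R) (f : ↥K →ₗ[R] ↥X) (g : ↥X →ₗ[R] ↥M),
      Function.Injective f ∧ Function.Surjective g ∧
      LinearMap.ker g = LinearMap.range f ∧
      IsTotallyCReflexive R C X ∧ gcdimLE C n K

/-- The `G_C`-dimension of `M`, as an element of `ℕ∞`. -/
def gcdim (C M : ModuleCat.{u} R) : ℕ∞ :=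
  sInf ((fun n : ℕ => (n : ℕ∞)) '' {n | gcdimLE R C n M})

/-- `grade_R(M) = inf { i | Ext_R^i(M, R) ≠ 0 }`, with `grade 0 = ∞`. -/
def gradeR (M : ModuleCat.{u} R) : ℕ∞ :=
  sInf ((fun i : ℕ => (i : ℕ∞)) ''
    {i | ¬ Subsingleton (ExtM R M (ModuleCat.of R R) i)})

/-- Reduced grade of `M` with respect to `C`. -/
def rgrade (C M : ModuleCat.{u} R) : ℕ∞ :=
  sInf ((fun i : ℕ => (i : ℕ∞)) ''
    {i | 0 < i ∧ ¬ Subsingleton (ExtM R M C i)})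

/-- `M` is reduced `G_C`-perfect. -/
def IsReducedGCPerfect (C M : ModuleCat.{u} R) : Prop :=
  gcdim R C M ≠ ⊤ ∧ rgrade R C M = gcdim R C M

/-- `M` is `G_C`-perfect. -/
def IsGCPerfect (C M : ModuleCat.{u} R) : Prop :=
  gcdim R C M ≠ ⊤ ∧ gradeR R M = gcdim R C M

/-- `π : P → M` is a projective cover: `P` projective, `π` surjective with superfluous kernel. -/
def IsProjectiveCover {P M : ModuleCat.{u} R} (π : ↥P →ₗ[R] ↥M) : Prop :=
  Module.Projective R ↥P ∧ Function.Surjective π ∧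
  ∀ N : Submodule R ↥P, N ⊔ LinearMap.ker π = ⊤ → N = ⊤

/-- `P₁ →d P₀ →π M → 0` is a minimal projective presentation of `M`. -/
def IsMinimalPresentation {P1 P0 M : ModuleCat.{u} R}
    (d : ↥P1 →ₗ[R] ↥P0) (π : ↥P0 →ₗ[R] ↥M) : Prop :=
  Module.Finite R ↥P1 ∧ Module.Finite R ↥P0 ∧
  IsProjectiveCover R π ∧
  LinearMap.range d = LinearMap.ker π ∧
  Module.Projective R ↥P1 ∧
  ∀ N : Submodule R ↥P1, N ⊔ LinearMap.ker d = ⊤ → N = ⊤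

/-- `T` is (a module isomorphic to) the transpose `Tr_C(M)` of `M` with respect to `C`,
computed from a minimal projective presentation of `M`. -/
def IsTransposeC (C M T : ModuleCat.{u} R) : Prop :=
  ∃ (P1 P0 : ModuleCat.{u} R) (d : ↥P1 →ₗ[R] ↥P0) (π : ↥P0 →ₗ[R] ↥M),
    IsMinimalPresentation R d π ∧
    Nonempty (↥T ≃ₗ[R]
      ((↥P1 →ₗ[R] ↥C) ⧸ LinearMap.range (LinearMap.lcomp R ↥C d)))

/-- `T` is the usual Auslander transpose `Tr(M) = Tr_R(M)`. -/
def IsTranspose (M T : ModuleCat.{u} R) : Prop :=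
  IsTransposeC R (ModuleCat.of R R) M T

/-- `S` is (a module isomorphic to) the first syzygy `Ω N`, i.e. the kernel of a
projective cover of `N`. -/
def IsSyzygyOf (N S : ModuleCat.{u} R) : Prop :=
  ∃ (P : ModuleCat.{u} R) (π : ↥P →ₗ[R] ↥N),
    Module.Finite R ↥P ∧ IsProjectiveCover R π ∧
    Nonempty (↥S ≃ₗ[R] LinearMap.ker π)

/-- `S` is (a module isomorphic to) the `n`-th syzygy `Ωⁿ M`. -/
def IsNthSyzygy : ℕ → ModuleCat.{u} R → ModuleCat.{u} R → Prop
  | 0, M, S => Nonempty (↥S ≃ₗ[R] ↥M)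
  | n+1, M, S => ∃ K : ModuleCat.{u} R, IsNthSyzygy n M K ∧ IsSyzygyOf R K S

/-- `L` is (a module isomorphic to) `λ M = Ω Tr M`. -/
def IsLambda (M L : ModuleCat.{u} R) : Prop :=
  ∃ T : ModuleCat.{u} R, IsTranspose R M T ∧ IsSyzygyOf R T L

/-- `M` is horizontally linked, i.e. `M ≅ λλM`. -/
def IsHorizontallyLinked (M : ModuleCat.{u} R) : Prop :=
  ∃ L L2 : ModuleCat.{u} R, IsLambda R M L ∧ IsLambda R L L2 ∧
    Nonempty (↥M ≃ₗ[R] ↥L2)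

/-- `M` is stable: it has no non-zero projective direct summand. -/
def IsStable (M : ModuleCat.{u} R) : Prop :=
  ∀ (P N : ModuleCat.{u} R), Module.Projective R ↥P →
    Nonempty (↥M ≃ₗ[R] (↥P × ↥N)) → Subsingleton ↥P

/-- `N` belongs to the Auslander class `A_C`. -/
def MemAuslanderClass (C N : ModuleCat.{u} R) : Prop :=
  Function.Bijective (TensorProduct.mk R ↥N ↥C) ∧
  (∀ i : ℕ, 0 < i → Subsingleton (TorM R C N i)) ∧
  (∀ i : ℕ, 0 < i → Subsingleton
    (ExtM R C (ModuleCat.of R (↥N ⊗[R] ↥C)) i))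

/-- `R` is semiperfect: every finite `R`-module has a projective cover. -/
def IsSemiperfectRing : Prop :=
  ∀ M : ModuleCat.{u} R, Module.Finite R ↥M →
    ∃ (P : ModuleCat.{u} R) (π : ↥P →ₗ[R] ↥M),
      Module.Finite R ↥P ∧ IsProjectiveCover R π

/-- Depth over a local ring, via Ext from the residue field. -/
def rdepth [IsLocalRing R] (M : ModuleCat.{u} R) : ℕ∞ :=
  sInf ((fun i : ℕ => (i : ℕ∞)) ''
    {i | ¬ Subsingleton
      (ExtM R (ModuleCat.of R (IsLocalRing.ResidueField R)) M i)})

/-- Projective dimension at most `n`. -/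
def pdimLE : ℕ → ModuleCat.{u} R → Prop
  | 0, M => Module.Projective R ↥M
  | n+1, M => ∃ (X K : ModuleCat.{u} R) (f : ↥K →ₗ[R] ↥X) (g : ↥X →ₗ[R] ↥M),
      Function.Injective f ∧ Function.Surjective g ∧
      LinearMap.ker g = LinearMap.range f ∧
      Module.Projective R ↥X ∧ pdimLE n K

/-- Projective dimension, as an element of `ℕ∞`. -/
def pdim (M : ModuleCat.{u} R) : ℕ∞ :=
  sInf ((fun n : ℕ => (n : ℕ∞)) '' {n | pdimLE R n M})

/-- `M` is `C`-`k`-torsionless. -/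
def IsCkTorsionless (C M : ModuleCat.{u} R) (k : ℕ) : Prop :=
  k = 0 ∨ ∀ T : ModuleCat.{u} R, IsTransposeC R C M T →
    ∀ i : ℕ, 1 ≤ i → i ≤ k → Subsingleton (ExtM R T C i)

/-- `M` is a `C`-syzygy: it embeds into `P ⊗_R C` with `P` finite projective. -/
def IsCSyzygy (C M : ModuleCat.{u} R) : Prop :=
  ∃ (P : ModuleCat.{u} R), Module.Finite R ↥P ∧ Module.Projective R ↥P ∧
    ∃ f : ↥M →ₗ[R] (↥P ⊗[R] ↥C), Function.Injective f


/-- There is an exact sequence `0 → N → X_k → ⋯ → X_1 → M → 0` of finite `R`-modules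
with `Ext_R^i(X_j, C) = 0` for all `i > 0` and all `j`. -/
def ExtVanishingChain (C : ModuleCat.{u} R) : ℕ → ModuleCat.{u} R → ModuleCat.{u} R → Prop
  | 0, N, M => Nonempty (↥N ≃ₗ[R] ↥M)
  | k+1, N, M => ∃ (X K : ModuleCat.{u} R) (f : ↥K →ₗ[R] ↥X) (g : ↥X →ₗ[R] ↥M),
      Function.Injective f ∧ Function.Surjective g ∧
      LinearMap.ker g = LinearMap.range f ∧
      Module.Finite R ↥X ∧ (∀ i : ℕ, 0 < i → Subsingleton (ExtM R X C i)) ∧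
      ExtVanishingChain C k N K

/-!
Since `Hom_R(C, C) = R` and `Ext_R^i(C, C) = 0` for `i > 0`, the complexes `RHom(C, RHom(M, C))` and
`RHom(M, R)` agree. The vanishing of `Ext_R^i(M, R)` for `i ≤ n` therefore forces `M^C = 0` and
makes the first `n` steps of the resolution of `M` stay exact after applying `(-)^C`.

Let `P₁ → P₀` present `Ω^{n-1} M`, with image `Ω^n M` and transpose `T`. If `Ext_R^i(T, C) = 0` for
all `i > 0`, then `Ω^n M` is isomorphic to its `C`-bidual and `Ext_R^i((Ω^n M)^C, C) = 0` for all
`i > 0`. If `T^* = 0`, then `T^C = 0`, so `P₁ → P₀` is injective and `Ω^n M ≅ P₁` has the same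
property. The property descends along the dually exact resolution from `Ω^n M` to `M`, but
`M^C = 0` and `M ≠ 0`. So `T` has grade `0`, and being `G_C`-perfect it would be totally
`C`-reflexive, which the first case excludes.
-/

section Ext

open Abelian

variable {𝒜 : Type*} [Category 𝒜] [Abelian 𝒜] [HasExt.{u} 𝒜]

theorem subsingleton_ext_of_sum_retract_left {X X' Y : 𝒜} {ι : Type*} [Fintype ι]
    {e : ι → (X ⟶ X')} {s : ι → (X' ⟶ X)} (hes : ∑ k, e k ≫ s k = 𝟙 X) {i : ℕ}
    [Subsingleton (Ext.{u} X' Y i)] : Subsingleton (Ext.{u} X Y i) := by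
  refine subsingleton_of_forall_eq 0 fun x ↦ ?_
  have vanish (k : ι) : (Ext.mk₀ (s k)).comp x (zero_add i) = 0 := Subsingleton.elim _ _
  rw [← Ext.mk₀_id_comp x, ← hes, Ext.mk₀_sum, Ext.sum_comp]
  refine Finset.sum_eq_zero fun k _ ↦ ?_
  rw [← Ext.mk₀_comp_mk₀, Ext.comp_assoc_of_second_deg_zero, vanish, Ext.comp_zero]

theorem subsingleton_ext_of_sum_retract_right {X Y Y' : 𝒜} {ι : Type*} [Fintype ι]
    {e : ι → (Y ⟶ Y')} {s : ι → (Y' ⟶ Y)} (hes : ∑ k, e k ≫ s k = 𝟙 Y) {i : ℕ}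
    [Subsingleton (Ext.{u} X Y' i)] : Subsingleton (Ext.{u} X Y i) := by
  refine subsingleton_of_forall_eq 0 fun x ↦ ?_
  have vanish (k : ι) : x.comp (Ext.mk₀ (e k)) (add_zero i) = 0 := Subsingleton.elim _ _
  rw [← Ext.comp_mk₀_id x, ← hes, Ext.mk₀_sum, Ext.comp_sum]
  refine Finset.sum_eq_zero fun k _ ↦ ?_
  rw [← Ext.mk₀_comp_mk₀, ← Ext.comp_assoc_of_second_deg_zero, vanish, Ext.zero_comp]

variable {S : ShortComplex 𝒜}

theorem subsingleton_ext_shortExact_X₁_left (hS : S.ShortExact) (Y : 𝒜) (i : ℕ)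
    [Subsingleton (Ext.{u} S.X₂ Y i)] [Subsingleton (Ext.{u} S.X₃ Y (i + 1))] :
    Subsingleton (Ext.{u} S.X₁ Y i) := by
  refine subsingleton_of_forall_eq 0 fun x ↦ ?_
  obtain ⟨y, rfl⟩ :=
    Ext.contravariant_sequence_exact₁ hS Y x (add_comm 1 i) (Subsingleton.elim _ _)
  rw [Subsingleton.elim y 0, Ext.comp_zero]

theorem subsingleton_ext_shortExact_X₃_right (hS : S.ShortExact) (X : 𝒜) (i : ℕ)
    [Subsingleton (Ext.{u} X S.X₂ i)] [Subsingleton (Ext.{u} X S.X₁ (i + 1))] :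
    Subsingleton (Ext.{u} X S.X₃ i) := by
  refine subsingleton_of_forall_eq 0 fun x ↦ ?_
  obtain ⟨y, rfl⟩ := Ext.covariant_sequence_exact₃ X hS x rfl (Subsingleton.elim _ _)
  rw [Subsingleton.elim y 0, Ext.zero_comp]

theorem exists_f_comp_eq_of_subsingleton_ext (hS : S.ShortExact) {Y : 𝒜}
    [Subsingleton (Ext.{u} S.X₃ Y 1)] (φ : S.X₁ ⟶ Y) : ∃ ψ : S.X₂ ⟶ Y, S.f ≫ ψ = φ := by
  obtain ⟨x, hx⟩ :=
    Ext.contravariant_sequence_exact₁ hS Y (Ext.mk₀ φ) rfl (Subsingleton.elim _ _)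
  obtain ⟨ψ, rfl⟩ := Ext.addEquiv₀.symm.surjective x
  refine ⟨ψ, Ext.addEquiv₀.symm.injective ?_⟩
  simpa only [Ext.addEquiv₀_symm_apply, Ext.mk₀_comp_mk₀] using hx

theorem exists_comp_g_eq_of_subsingleton_ext (hS : S.ShortExact) {X : 𝒜}
    [Subsingleton (Ext.{u} X S.X₁ 1)] (φ : X ⟶ S.X₃) : ∃ ψ : X ⟶ S.X₂, ψ ≫ S.g = φ := by
  obtain ⟨x, hx⟩ := Ext.covariant_sequence_exact₃ X hS (Ext.mk₀ φ) rfl (Subsingleton.elim _ _)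
  obtain ⟨ψ, rfl⟩ := Ext.addEquiv₀.symm.surjective x
  refine ⟨ψ, Ext.addEquiv₀.symm.injective ?_⟩
  simpa only [Ext.addEquiv₀_symm_apply, Ext.mk₀_comp_mk₀] using hx

end Ext

section ExtM

variable {R}

theorem preservesFiniteColimits_linearYoneda_rightOp (N : ModuleCat.{u} R) :
    Limits.PreservesFiniteColimits ((linearYoneda R (ModuleCat.{u} R)).obj N).rightOp := by
  let F := (linearYoneda R (ModuleCat.{u} R)).obj N
  have : Limits.PreservesLimits (F ⋙ forget (ModuleCat.{u} R)) :=
    inferInstanceAs (Limits.PreservesLimits (yoneda.obj N))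
  have : Limits.PreservesLimits F :=
    Limits.preservesLimits_of_reflects_of_preserves F (forget (ModuleCat.{u} R))
  exact Limits.preservesFiniteColimits_rightOp F

theorem subsingleton_extM_zero_iff (M N : ModuleCat.{u} R) :
    Subsingleton (ExtM R M N 0) ↔ Subsingleton (↥M →ₗ[R] ↥N) := by
  have := preservesFiniteColimits_linearYoneda_rightOp N
  let e : ModuleCat.of R (M ⟶ N) ≅ ExtM R M N 0 :=
    (((linearYoneda R (ModuleCat.{u} R)).obj N).rightOp.leftDerivedZeroIsoSelf.app M).unop
  rw [← e.toLinearEquiv.toEquiv.subsingleton_congr]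
  exact ModuleCat.homEquiv.subsingleton_congr

theorem subsingleton_extM_succ_iff (M N : ModuleCat.{u} R) (i : ℕ) :
    Subsingleton (ExtM R M N (i + 1)) ↔ Subsingleton (Abelian.Ext.{u} M N (i + 1)) := by
  let P := ProjectiveResolution.of M
  have exact_iff : Subsingleton (ExtM R M N (i + 1)) ↔
      ∀ f : P.complex.X (i + 1) ⟶ N, P.complex.d (i + 2) (i + 1) ≫ f = 0 →
        ∃ g : P.complex.X i ⟶ N, P.complex.d (i + 1) i ≫ g = f := by
    rw [← ModuleCat.isZero_iff_subsingleton, ExtM, (P.isoExt (R := R) (i + 1) N).isZero_iff,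
      ← HomologicalComplex.exactAt_iff_isZero_homology,
      HomologicalComplex.exactAt_iff' _ i (i + 1) (i + 2) (by simp) (by simp),
      ShortComplex.moduleCat_exact_iff]
    rfl
  rw [exact_iff]
  constructor
  · intro h
    refine subsingleton_of_forall_eq 0 fun a ↦ ?_
    obtain ⟨f, hf, rfl⟩ := P.extMk_surjective a (i + 2) rfl
    exact (P.extMk_eq_zero_iff f (i + 2) rfl hf i rfl).2 (h f hf)
  · intro h f hf
    exact (P.extMk_eq_zero_iff f (i + 2) rfl hf i rfl).1 (Subsingleton.elim _ _)

end ExtM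

section ModuleExt

variable {R}
variable {A B D X Y : Type u} [AddCommGroup A] [Module R A] [AddCommGroup B] [Module R B]
  [AddCommGroup D] [Module R D] [AddCommGroup X] [Module R X] [AddCommGroup Y] [Module R Y]

/-- The sequence `0 → A → B → D → 0` with maps `f` and `g` is exact. -/
structure IsShortExact (f : A →ₗ[R] B) (g : B →ₗ[R] D) : Prop where
  injective : Function.Injective f
  exact : Function.Exact f g
  surjective : Function.Surjective g

variable (R X Y) in
/-- `Ext_R^i(X, Y) = 0` for all `i > 0`; the degree is written `i + 1`. -/
def HigherExtVanish : Prop :=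
  ∀ i : ℕ, Subsingleton (Abelian.Ext.{u} (ModuleCat.of R X) (ModuleCat.of R Y) (i + 1))

theorem higherExtVanish_iff_extM (M N : ModuleCat.{u} R) :
    HigherExtVanish R ↥M ↥N ↔ ∀ i : ℕ, 0 < i → Subsingleton (ExtM R M N i) := by
  refine ⟨fun h i hi ↦ ?_, fun h i ↦ (subsingleton_extM_succ_iff M N i).1 (h _ i.succ_pos)⟩
  obtain ⟨j, rfl⟩ := Nat.exists_eq_add_one.2 hi
  exact (subsingleton_extM_succ_iff M N j).2 (h j)

theorem HigherExtVanish.of_projective [Module.Projective R X] : HigherExtVanish R X Y := by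
  have : Projective (ModuleCat.of R X) := (IsProjective.iff_projective X).1 inferInstance
  exact fun i ↦ Abelian.Ext.subsingleton_of_projective _ _ i

theorem HigherExtVanish.of_subsingleton_right [Subsingleton Y] : HigherExtVanish R X Y := fun _ ↦ by
  have isZero := ModuleCat.isZero_of_subsingleton (ModuleCat.of R Y)
  refine subsingleton_of_forall_eq 0 fun x ↦ ?_
  rw [← x.comp_mk₀_id, isZero.eq_of_src (𝟙 _) 0, Abelian.Ext.mk₀_zero, Abelian.Ext.comp_zero]

theorem subsingleton_ext_of_linearEquiv_left (e : A ≃ₗ[R] B) {i : ℕ}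
    [Subsingleton (Abelian.Ext.{u} (ModuleCat.of R B) (ModuleCat.of R Y) i)] :
    Subsingleton (Abelian.Ext.{u} (ModuleCat.of R A) (ModuleCat.of R Y) i) :=
  subsingleton_ext_of_sum_retract_left (ι := Unit) (e := fun _ ↦ e.toModuleIso.hom)
    (s := fun _ ↦ e.toModuleIso.inv)
    ((Fintype.sum_unique _).trans e.toModuleIso.hom_inv_id)

theorem subsingleton_ext_of_linearEquiv_right (e : A ≃ₗ[R] B) {i : ℕ}
    [Subsingleton (Abelian.Ext.{u} (ModuleCat.of R X) (ModuleCat.of R B) i)] :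
    Subsingleton (Abelian.Ext.{u} (ModuleCat.of R X) (ModuleCat.of R A) i) :=
  subsingleton_ext_of_sum_retract_right (ι := Unit) (e := fun _ ↦ e.toModuleIso.hom)
    (s := fun _ ↦ e.toModuleIso.inv)
    ((Fintype.sum_unique _).trans e.toModuleIso.hom_inv_id)

theorem HigherExtVanish.of_linearEquiv_left (h : HigherExtVanish R B Y) (e : A ≃ₗ[R] B) :
    HigherExtVanish R A Y := fun i ↦
  have := h i
  subsingleton_ext_of_linearEquiv_left e

theorem HigherExtVanish.of_linearEquiv_right (h : HigherExtVanish R X B) (e : A ≃ₗ[R] B) :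
    HigherExtVanish R X A := fun i ↦
  have := h i
  subsingleton_ext_of_linearEquiv_right e

namespace IsShortExact

variable {f : A →ₗ[R] B} {g : B →ₗ[R] D}

theorem shortExact (h : IsShortExact f g) :
    (ModuleCat.shortComplexOfCompEqZero f g h.exact.linearMap_comp_eq_zero).ShortExact :=
  ModuleCat.shortComplex_shortExact _ h.exact h.injective h.surjective

theorem higherExtVanish_left (h : IsShortExact f g) (hB : HigherExtVanish R B Y)
    (hD : HigherExtVanish R D Y) : HigherExtVanish R A Y := fun i ↦
  have := hB i
  have := hD (i + 1)
  subsingleton_ext_shortExact_X₁_left h.shortExact (ModuleCat.of R Y) (i + 1)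

theorem higherExtVanish_right (h : IsShortExact f g) (hB : HigherExtVanish R X B)
    (hA : HigherExtVanish R X A) : HigherExtVanish R X D := fun i ↦
  have := hB i
  have := hA (i + 1)
  subsingleton_ext_shortExact_X₃_right h.shortExact (ModuleCat.of R X) (i + 1)

theorem surjective_lcomp (h : IsShortExact f g)
    [Subsingleton (Abelian.Ext.{u} (ModuleCat.of R D) (ModuleCat.of R Y) 1)] :
    Function.Surjective (LinearMap.lcomp R Y f) := fun φ ↦
  have ⟨ψ, hψ⟩ := exists_f_comp_eq_of_subsingleton_ext h.shortExact (ModuleCat.ofHom φ)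
  ⟨ψ.hom, congrArg ModuleCat.Hom.hom hψ⟩

theorem exists_comp_eq (h : IsShortExact f g)
    [Subsingleton (Abelian.Ext.{u} (ModuleCat.of R X) (ModuleCat.of R A) 1)] (φ : X →ₗ[R] D) :
    ∃ ψ : X →ₗ[R] B, g ∘ₗ ψ = φ :=
  have ⟨ψ, hψ⟩ := exists_comp_g_eq_of_subsingleton_ext h.shortExact (ModuleCat.ofHom φ)
  ⟨ψ.hom, congrArg ModuleCat.Hom.hom hψ⟩

theorem lcomp_rangeRestrict (h : IsShortExact f g) :
    IsShortExact (LinearMap.lcomp R Y g) (LinearMap.lcomp R Y f).rangeRestrict where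
  injective := LinearMap.lcomp_injective_of_surjective g h.surjective
  exact φ := by
    rw [← LinearMap.exact_lcomp_of_exact_of_surjective Y h.exact h.surjective φ]
    exact Subtype.ext_iff
  surjective := LinearMap.surjective_rangeRestrict _

theorem lcomp (h : IsShortExact f g) (hf : Function.Surjective (LinearMap.lcomp R Y f)) :
    IsShortExact (LinearMap.lcomp R Y g) (LinearMap.lcomp R Y f) where
  injective := LinearMap.lcomp_injective_of_surjective g h.surjective
  exact := LinearMap.exact_lcomp_of_exact_of_surjective Y h.exact h.surjective
  surjective := hf

end IsShortExact

theorem isShortExact_subtype_mkQ (N : Submodule R A) : IsShortExact N.subtype N.mkQ where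
  injective := N.injective_subtype
  exact := LinearMap.exact_subtype_mkQ N
  surjective := N.mkQ_surjective

end ModuleExt

section FiniteProjective

variable {R}
variable {C P X Y : Type u} [AddCommGroup C] [Module R C] [AddCommGroup P] [Module R P]
  [AddCommGroup X] [Module R X] [AddCommGroup Y] [Module R Y]

theorem exists_dualBasis (R : Type*) [CommRing R] (P : Type*) [AddCommGroup P] [Module R P]
    [Module.Finite R P] [Module.Projective R P] :
    ∃ (n : ℕ) (x : Fin n → P) (ξ : Fin n → Module.Dual R P), ∀ p, ∑ k, ξ k p • x k = p := by
  obtain ⟨n, f, g, -, -, hfg⟩ := Module.Finite.exists_comp_eq_id_of_projective R P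
  refine ⟨n, fun k ↦ f (Pi.single k 1), fun k ↦ LinearMap.proj k ∘ₗ g, fun p ↦ ?_⟩
  calc ∑ k, g p k • f (Pi.single k 1)
      = f (∑ k, g p k • Pi.single k 1) := by simp only [map_sum, map_smul]
    _ = f (g p) := by rw [← pi_eq_sum_univ' (g p)]
    _ = p := LinearMap.congr_fun hfg p

theorem sum_smulRight_dualBasis {n : ℕ} {x : Fin n → P} {ξ : Fin n → Module.Dual R P}
    (hxξ : ∀ p, ∑ k, ξ k p • x k = p) (φ : P →ₗ[R] C) :
    ∑ k, (ξ k).smulRight (φ (x k)) = φ := by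
  ext p
  simpa using congrArg φ (hxξ p)

variable [Module.Finite R P] [Module.Projective R P]

theorem exists_sum_retract_dual :
    ∃ (n : ℕ) (e : Fin n → (ModuleCat.of R (P →ₗ[R] C) ⟶ ModuleCat.of R C))
      (s : Fin n → (ModuleCat.of R C ⟶ ModuleCat.of R (P →ₗ[R] C))), ∑ k, e k ≫ s k = 𝟙 _ := by
  obtain ⟨n, x, ξ, hxξ⟩ := exists_dualBasis R P
  refine ⟨n, fun k ↦ ModuleCat.ofHom (LinearMap.applyₗ (x k)),
    fun k ↦ ModuleCat.ofHom (LinearMap.smulRightₗ (ξ k)), ?_⟩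
  ext φ : 2
  simpa using sum_smulRight_dualBasis hxξ φ

theorem HigherExtVanish.dual_right (h : HigherExtVanish R X C) :
    HigherExtVanish R X (P →ₗ[R] C) := fun i ↦
  have ⟨_, _, _, hes⟩ := exists_sum_retract_dual (R := R) (P := P) (C := C)
  have := h i
  subsingleton_ext_of_sum_retract_right hes

theorem HigherExtVanish.dual_left (h : HigherExtVanish R C Y) :
    HigherExtVanish R (P →ₗ[R] C) Y := fun i ↦
  have ⟨_, _, _, hes⟩ := exists_sum_retract_dual (R := R) (P := P) (C := C)
  have := h i
  subsingleton_ext_of_sum_retract_left hes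

theorem bijective_bidualityMap (hC : Function.Bijective (LinearMap.lsmul R C)) :
    Function.Bijective (bidualityMap R (ModuleCat.of R C) (ModuleCat.of R P)) := by
  obtain ⟨n, x, ξ, hxξ⟩ := exists_dualBasis R P
  constructor
  · refine (injective_iff_map_eq_zero _).2 fun p hp ↦ ?_
    have hξ (k : Fin n) : ξ k p = 0 := by
      refine (injective_iff_map_eq_zero _).1 hC.injective _ (LinearMap.ext fun c ↦ ?_)
      exact LinearMap.congr_fun hp ((ξ k).smulRight c)
    simpa only [hξ, zero_smul, Finset.sum_const_zero] using (hxξ p).symm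
  · intro Φ
    choose r hr using fun k ↦ hC.surjective (Φ ∘ₗ LinearMap.smulRightₗ (ξ k))
    refine ⟨∑ k, r k • x k, LinearMap.ext fun φ ↦ ?_⟩
    calc φ (∑ k, r k • x k)
        = ∑ k, r k • φ (x k) := by simp only [map_sum, map_smul]
      _ = ∑ k, Φ ((ξ k).smulRight (φ (x k))) :=
          Finset.sum_congr rfl fun k _ ↦ LinearMap.congr_fun (hr k) (φ (x k))
      _ = Φ φ := by rw [← map_sum, sum_smulRight_dualBasis hxξ]

end FiniteProjective

section WeaklyReflexive

variable {R}
variable {C K L P T : Type u} [AddCommGroup C] [Module R C] [AddCommGroup K] [Module R K]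
  [AddCommGroup L] [Module R L] [AddCommGroup P] [Module R P] [AddCommGroup T] [Module R T]

theorem subsingleton_of_subsingleton_linearMap [IsNoetherianRing R] [Module.Finite R C]
    [FaithfulSMul R C] [Module.Finite R L] [Subsingleton (C →ₗ[R] L)] : Subsingleton L := by
  obtain ⟨r, hr, hreg⟩ := IsSMulRegular.subsingleton_linearMap_iff.1
    (inferInstance : Subsingleton (C →ₗ[R] L))
  rw [Module.annihilator_eq_bot.2 inferInstance, Submodule.mem_bot] at hr
  exact IsSMulRegular.zero_iff_subsingleton.1 (hr ▸ hreg)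

theorem faithfulSMul_of_injective_lsmul (hC : Function.Injective (LinearMap.lsmul R C)) :
    FaithfulSMul R C :=
  ⟨fun h ↦ hC (LinearMap.ext h)⟩

/-- The isomorphism `L^* ≃ Hom_R(C, L^C)` coming from `R ≃ Hom_R(C, C)` and the symmetry
`Hom_R(L, Hom_R(C, C)) ≃ Hom_R(C, Hom_R(L, C))`; it sends `ψ` to `c ↦ (l ↦ ψ l • c)`. -/
def dualEquivOfHomothety (hC : Function.Bijective (LinearMap.lsmul R C)) :
    Module.Dual R L ≃ₗ[R] (C →ₗ[R] L →ₗ[R] C) :=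
  (LinearEquiv.congrRight (LinearEquiv.ofBijective (LinearMap.lsmul R C) hC)).trans LinearMap.lflip

theorem subsingleton_linearMap_of_subsingleton_dual [IsNoetherianRing R] [Module.Finite R C]
    [Module.Finite R K] (hC : Function.Bijective (LinearMap.lsmul R C))
    [Subsingleton (Module.Dual R K)] : Subsingleton (K →ₗ[R] C) := by
  have := faithfulSMul_of_injective_lsmul hC.injective
  have : Subsingleton (C →ₗ[R] K →ₗ[R] C) := (dualEquivOfHomothety hC).symm.subsingleton
  exact subsingleton_of_subsingleton_linearMap (R := R) (C := C)

variable (R C K) in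
/-- A weak form of total `C`-reflexivity: the biduality map of `K` is bijective and
`Ext_R^i(K^C, C) = 0` for all `i > 0`, with no condition on `K` itself or on `Ext_R^i(K, C)`. -/
structure IsWeaklyCReflexive : Prop where
  bijective : Function.Bijective (bidualityMap R (ModuleCat.of R C) (ModuleCat.of R K))
  higherExtVanish : HigherExtVanish R (K →ₗ[R] C) C

theorem IsWeaklyCReflexive.of_linearEquiv (hL : IsWeaklyCReflexive R C L) (e : L ≃ₗ[R] K) :
    IsWeaklyCReflexive R C K where
  bijective := by
    convert ((e.congrLeft C R).congrLeft C R).bijective.comp (hL.bijective.comp e.symm.bijective)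
    ext k φ
    exact congrArg φ (e.apply_symm_apply k).symm
  higherExtVanish := hL.higherExtVanish.of_linearEquiv_left (e.congrLeft C R).symm

theorem IsWeaklyCReflexive.subsingleton (hK : IsWeaklyCReflexive R C K)
    [Subsingleton (K →ₗ[R] C)] : Subsingleton K :=
  hK.bijective.injective.subsingleton

theorem injective_bidualityMap_of_injective {f : L →ₗ[R] P} (hf : Function.Injective f)
    (hP : Function.Injective (bidualityMap R (ModuleCat.of R C) (ModuleCat.of R P))) :
    Function.Injective (bidualityMap R (ModuleCat.of R C) (ModuleCat.of R L)) :=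
  .of_comp (f := LinearMap.lcomp R C (LinearMap.lcomp R C f)) (hP.comp hf)

theorem surjective_bidualityMap_of_surjective {p : P →ₗ[R] L}
    (hp : Function.Surjective (LinearMap.lcomp R C (LinearMap.lcomp R C p)))
    (hP : Function.Surjective (bidualityMap R (ModuleCat.of R C) (ModuleCat.of R P))) :
    Function.Surjective (bidualityMap R (ModuleCat.of R C) (ModuleCat.of R L)) :=
  .of_comp (g := p) (hp.comp hP)

namespace IsShortExact

variable {f : L →ₗ[R] P} {g : P →ₗ[R] K}

-- Every map `C → L^C` comes from some `ψ : L → R`; extending `ψ` to `P` shows that the map lands in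
-- the image `I` of `P^C`. As `Ext_R^1(C, I) = 0`, no nonzero map from `C` to `L^C / I` remains.
theorem surjective_lcomp_of_surjective_lcomp_ring [IsNoetherianRing R] [Module.Finite R C]
    [Module.Finite R L] (h : IsShortExact f g) (hC : Function.Bijective (LinearMap.lsmul R C))
    (hP : HigherExtVanish R C (P →ₗ[R] C)) (hK : HigherExtVanish R C (K →ₗ[R] C))
    (hf : Function.Surjective (LinearMap.lcomp R R f)) :
    Function.Surjective (LinearMap.lcomp R C f) := by
  have := faithfulSMul_of_injective_lsmul hC.injective
  let I := LinearMap.range (LinearMap.lcomp R C f)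
  have := h.lcomp_rangeRestrict.higherExtVanish_right hP hK 0
  have : Subsingleton (C →ₗ[R] (L →ₗ[R] C) ⧸ I) := by
    refine subsingleton_of_forall_eq 0 fun χ ↦ ?_
    obtain ⟨χ, rfl⟩ := (isShortExact_subtype_mkQ I).exists_comp_eq χ
    obtain ⟨ψ, hψ⟩ := hf ((dualEquivOfHomothety hC).symm χ)
    ext c
    have hχ : LinearMap.lcomp R C f (dualEquivOfHomothety hC ψ c) = χ c :=
      LinearMap.congr_fun ((LinearEquiv.eq_symm_apply _).1 hψ) c
    exact (Submodule.Quotient.mk_eq_zero I).2 ⟨_, hχ⟩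
  have : Subsingleton ((L →ₗ[R] C) ⧸ I) := subsingleton_of_subsingleton_linearMap (R := R) (C := C)
  exact LinearMap.range_eq_top.1 (Submodule.Quotient.subsingleton_iff.1 this)

theorem isWeaklyCReflexive (h : IsShortExact f g)
    (hf : Function.Surjective (LinearMap.lcomp R C f)) (hP : IsWeaklyCReflexive R C P)
    (hL : IsWeaklyCReflexive R C L) : IsWeaklyCReflexive R C K := by
  have hdual := h.lcomp hf
  have := hL.higherExtVanish 0
  refine ⟨?_, hdual.higherExtVanish_left hP.higherExtVanish hL.higherExtVanish⟩
  exact LinearMap.bijective_of_surjective_of_bijective_of_right_exact f g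
    (LinearMap.lcomp R C (LinearMap.lcomp R C f)) (LinearMap.lcomp R C (LinearMap.lcomp R C g))
    (bidualityMap R (ModuleCat.of R C) (ModuleCat.of R L))
    (bidualityMap R (ModuleCat.of R C) (ModuleCat.of R P))
    (bidualityMap R (ModuleCat.of R C) (ModuleCat.of R K)) rfl rfl h.exact
    (LinearMap.exact_lcomp_of_exact_of_surjective C hdual.exact hdual.surjective)
    hL.bijective.surjective hP.bijective h.surjective hdual.surjective_lcomp

theorem isWeaklyCReflexive_of_dual {p : P →ₗ[R] L} {q : (P →ₗ[R] C) →ₗ[R] T}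
    (h : IsShortExact (LinearMap.lcomp R C p) q) (hP : IsWeaklyCReflexive R C P)
    (hT : HigherExtVanish R T C)
    (hL : Function.Injective (bidualityMap R (ModuleCat.of R C) (ModuleCat.of R L))) :
    IsWeaklyCReflexive R C L where
  bijective :=
    have := hT 0
    ⟨hL, surjective_bidualityMap_of_surjective h.surjective_lcomp hP.bijective.surjective⟩
  higherExtVanish := h.higherExtVanish_left hP.higherExtVanish hT

end IsShortExact

theorem injective_of_subsingleton_linearMap_coker {d : L →ₗ[R] P} {q : (L →ₗ[R] C) →ₗ[R] T}
    (hdq : Function.Exact (LinearMap.lcomp R C d) q) (hq : Function.Surjective q)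
    (hL : Function.Injective (bidualityMap R (ModuleCat.of R C) (ModuleCat.of R L)))
    [Subsingleton (T →ₗ[R] C)] : Function.Injective d := by
  have hdual := LinearMap.exact_lcomp_of_exact_of_surjective C hdq hq
  have hdd : Function.Injective (LinearMap.lcomp R C (LinearMap.lcomp R C d)) := by
    refine (injective_iff_map_eq_zero _).2 fun Φ hΦ ↦ ?_
    obtain ⟨θ, rfl⟩ := (hdual Φ).1 hΦ
    rw [Subsingleton.elim θ 0, map_zero]
  exact .of_comp (f := bidualityMap R (ModuleCat.of R C) (ModuleCat.of R P)) (hdd.comp hL)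

end WeaklyReflexive

section Syzygy

variable {R}

namespace IsSemidualizing

variable {C : ModuleCat.{u} R}

theorem bijective_lsmul (hC : IsSemidualizing R C) : Function.Bijective (LinearMap.lsmul R ↥C) :=
  hC.2.1

theorem higherExtVanish (hC : IsSemidualizing R C) : HigherExtVanish R ↥C ↥C :=
  (higherExtVanish_iff_extM C C).2 hC.2.2

theorem isWeaklyCReflexive (hC : IsSemidualizing R C) {P : Type u} [AddCommGroup P] [Module R P]
    [Module.Finite R P] [Module.Projective R P] : IsWeaklyCReflexive R ↥C P :=
  ⟨bijective_bidualityMap hC.bijective_lsmul, hC.higherExtVanish.dual_left⟩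

end IsSemidualizing

theorem IsSyzygyOf.exists_isShortExact {N S : ModuleCat.{u} R} (h : IsSyzygyOf R N S) :
    ∃ (P : ModuleCat.{u} R) (f : ↥S →ₗ[R] ↥P) (g : ↥P →ₗ[R] ↥N),
      Module.Finite R ↥P ∧ Module.Projective R ↥P ∧ IsShortExact f g := by
  obtain ⟨P, π, hfin, ⟨hproj, hπ, -⟩, ⟨e⟩⟩ := h
  refine ⟨P, (LinearMap.ker π).subtype ∘ₗ e.toLinearMap, π, hfin, hproj,
    (LinearMap.ker π).injective_subtype.comp e.injective, ?_, hπ⟩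
  exact (e.surjective.comp_exact_iff_exact).2 (LinearMap.exact_subtype_ker_map π)

namespace IsNthSyzygy

variable {M S : ModuleCat.{u} R} {m : ℕ}

theorem subsingleton_ext (h : IsNthSyzygy R m M S) (Y : ModuleCat.{u} R) (i : ℕ)
    [hM : Subsingleton (Abelian.Ext.{u} M Y (m + i + 1))] :
    Subsingleton (Abelian.Ext.{u} S Y (i + 1)) := by
  induction m generalizing S i with
  | zero =>
    rw [zero_add] at hM
    exact subsingleton_ext_of_linearEquiv_left (A := ↥S) (B := ↥M) (Y := ↥Y) h.some
  | succ m ih =>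
    obtain ⟨K, hK, hS⟩ := h
    obtain ⟨P, f, g, -, hP, hfg⟩ := hS.exists_isShortExact
    rw [Nat.add_right_comm m 1 i] at hM
    have := ih hK (i + 1)
    have := HigherExtVanish.of_projective (R := R) (X := ↥P) (Y := ↥Y) i
    exact subsingleton_ext_shortExact_X₁_left hfg.shortExact Y (i + 1)

variable [IsNoetherianRing R] {C : ModuleCat.{u} R}

theorem surjective_lcomp_of_higherExtVanish (h : IsNthSyzygy R m M S) (hC : IsSemidualizing R C)
    [Subsingleton (Abelian.Ext.{u} M (ModuleCat.of R R) (m + 1))]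
    (hS : HigherExtVanish R ↥C (↥S →ₗ[R] ↥C))
    {L P : Type u} [AddCommGroup L] [Module R L] [AddCommGroup P] [Module R P] [Module.Finite R P]
    [Module.Projective R P] {f : L →ₗ[R] P} {g : P →ₗ[R] ↥S} (hfg : IsShortExact f g) :
    Function.Surjective (LinearMap.lcomp R ↥C f) := by
  have : Module.Finite R ↥C := hC.1
  have : Module.Finite R L := .of_injective f hfg.injective
  have : Subsingleton (Abelian.Ext.{u} S (ModuleCat.of R R) 1) := h.subsingleton_ext _ 0
  exact hfg.surjective_lcomp_of_surjective_lcomp_ring hC.bijective_lsmul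
    hC.higherExtVanish.dual_right hS hfg.surjective_lcomp

theorem higherExtVanish_dual (h : IsNthSyzygy R m M S) (hC : IsSemidualizing R C)
    (hM : HigherExtVanish R ↥C (↥M →ₗ[R] ↥C))
    (hext : ∀ i < m, Subsingleton (Abelian.Ext.{u} M (ModuleCat.of R R) (i + 1))) :
    HigherExtVanish R ↥C (↥S →ₗ[R] ↥C) := by
  induction m generalizing S with
  | zero => exact hM.of_linearEquiv_right (h.some.congrLeft ↥C R)
  | succ m ih =>
    obtain ⟨K, hK, hS⟩ := h
    obtain ⟨P, f, g, _, _, hfg⟩ := hS.exists_isShortExact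
    have hKC := ih hK fun i hi ↦ hext i (hi.trans m.lt_succ_self)
    have := hext m m.lt_succ_self
    have hf := hK.surjective_lcomp_of_higherExtVanish hC hKC hfg
    exact (hfg.lcomp hf).higherExtVanish_right hC.higherExtVanish.dual_right hKC

theorem surjective_lcomp (h : IsNthSyzygy R m M S) (hC : IsSemidualizing R C)
    (hM : HigherExtVanish R ↥C (↥M →ₗ[R] ↥C))
    (hext : ∀ i ≤ m, Subsingleton (Abelian.Ext.{u} M (ModuleCat.of R R) (i + 1)))
    {L P : Type u} [AddCommGroup L] [Module R L] [AddCommGroup P] [Module R P] [Module.Finite R P]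
    [Module.Projective R P] {f : L →ₗ[R] P} {g : P →ₗ[R] ↥S} (hfg : IsShortExact f g) :
    Function.Surjective (LinearMap.lcomp R ↥C f) :=
  have := hext m le_rfl
  h.surjective_lcomp_of_higherExtVanish hC
    (h.higherExtVanish_dual hC hM fun i hi ↦ hext i hi.le) hfg

theorem isWeaklyCReflexive (h : IsNthSyzygy R m M S) (hC : IsSemidualizing R C)
    (hM : HigherExtVanish R ↥C (↥M →ₗ[R] ↥C))
    (hext : ∀ i < m, Subsingleton (Abelian.Ext.{u} M (ModuleCat.of R R) (i + 1)))
    (hS : IsWeaklyCReflexive R ↥C ↥S) : IsWeaklyCReflexive R ↥C ↥M := by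
  induction m generalizing S with
  | zero => exact hS.of_linearEquiv h.some
  | succ m ih =>
    obtain ⟨K, hK, hSK⟩ := h
    obtain ⟨P, f, g, _, _, hfg⟩ := hSK.exists_isShortExact
    have hf := hK.surjective_lcomp hC hM (fun i hi ↦ hext i (Nat.lt_succ_of_le hi)) hfg
    exact ih hK (fun i hi ↦ hext i (hi.trans m.lt_succ_self))
      (hfg.isWeaklyCReflexive hf hC.isWeaklyCReflexive hS)

end IsNthSyzygy

end Syzygy

section Transpose

variable {R}

section Presentation

variable {C : ModuleCat.{u} R} {P₀ P₁ T : Type u} [AddCommGroup P₀] [Module R P₀] [AddCommGroup P₁]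
  [Module R P₁] [AddCommGroup T] [Module R T] {d : P₁ →ₗ[R] P₀} {q : (P₁ →ₗ[R] ↥C) →ₗ[R] T}

theorem isShortExact_lcomp_rangeRestrict (hdq : Function.Exact (LinearMap.lcomp R ↥C d) q)
    (hq : Function.Surjective q)
    (hd : Function.Surjective (LinearMap.lcomp R ↥C (LinearMap.range d).subtype)) :
    IsShortExact (LinearMap.lcomp R ↥C d.rangeRestrict) q where
  injective := LinearMap.lcomp_injective_of_surjective _ d.surjective_rangeRestrict
  exact := (hd.comp_exact_iff_exact (f := LinearMap.lcomp R ↥C d.rangeRestrict)).1 hdq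
  surjective := hq

variable [Module.Finite R P₁] [Module.Projective R P₁]

theorem isWeaklyCReflexive_range_of_higherExtVanish [Module.Finite R P₀] [Module.Projective R P₀]
    (hC : IsSemidualizing R C) (hdq : Function.Exact (LinearMap.lcomp R ↥C d) q)
    (hq : Function.Surjective q)
    (hd : Function.Surjective (LinearMap.lcomp R ↥C (LinearMap.range d).subtype))
    (hT : HigherExtVanish R T ↥C) : IsWeaklyCReflexive R ↥C (LinearMap.range d) :=
  (isShortExact_lcomp_rangeRestrict hdq hq hd).isWeaklyCReflexive_of_dual hC.isWeaklyCReflexive hT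
    (injective_bidualityMap_of_injective (LinearMap.range d).injective_subtype
      (bijective_bidualityMap hC.bijective_lsmul).injective)

theorem isWeaklyCReflexive_range_of_subsingleton_dual [IsNoetherianRing R]
    (hC : IsSemidualizing R C) (hdq : Function.Exact (LinearMap.lcomp R ↥C d) q)
    (hq : Function.Surjective q) [Subsingleton (Module.Dual R T)] :
    IsWeaklyCReflexive R ↥C (LinearMap.range d) := by
  have : Module.Finite R ↥C := hC.1
  have : Module.Finite R T := .of_surjective q hq
  have : Subsingleton (T →ₗ[R] ↥C) := subsingleton_linearMap_of_subsingleton_dual hC.bijective_lsmul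
  have hd : Function.Injective d := injective_of_subsingleton_linearMap_coker hdq hq
    (bijective_bidualityMap hC.bijective_lsmul).injective
  exact hC.isWeaklyCReflexive.of_linearEquiv (LinearEquiv.ofInjective d hd)

end Presentation

theorem IsTransposeC.exists_exact {C S T : ModuleCat.{u} R} (h : IsTransposeC R C S T) :
    ∃ (P₁ P₀ : ModuleCat.{u} R) (d : ↥P₁ →ₗ[R] ↥P₀) (π : ↥P₀ →ₗ[R] ↥S)
      (q : (↥P₁ →ₗ[R] ↥C) →ₗ[R] ↥T), IsMinimalPresentation R d π ∧
      Function.Exact (LinearMap.lcomp R ↥C d) q ∧ Function.Surjective q := by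
  obtain ⟨P₁, P₀, d, π, hd, ⟨e⟩⟩ := h
  refine ⟨P₁, P₀, d, π, e.symm.toLinearMap ∘ₗ Submodule.mkQ _, hd, ?_,
    e.symm.surjective.comp (Submodule.mkQ_surjective _)⟩
  exact e.symm.injective.comp_exact_iff_exact.2 (LinearMap.exact_map_mkQ_range _)

theorem IsMinimalPresentation.isSyzygyOf {P₁ P₀ S : ModuleCat.{u} R} {d : ↥P₁ →ₗ[R] ↥P₀}
    {π : ↥P₀ →ₗ[R] ↥S} (h : IsMinimalPresentation R d π) :
    IsSyzygyOf R S (ModuleCat.of R (LinearMap.range d)) :=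
  ⟨P₀, π, h.2.1, h.2.2.1, ⟨LinearEquiv.ofEq _ _ h.2.2.2.1⟩⟩

theorem IsMinimalPresentation.isShortExact {P₁ P₀ S : ModuleCat.{u} R} {d : ↥P₁ →ₗ[R] ↥P₀}
    {π : ↥P₀ →ₗ[R] ↥S} (h : IsMinimalPresentation R d π) :
    IsShortExact (LinearMap.range d).subtype π where
  injective := Submodule.injective_subtype _
  exact := LinearMap.exact_iff.2 ((LinearMap.range d).range_subtype.trans h.2.2.2.1).symm
  surjective := h.2.2.1.2.1

end Transpose

section Grade

variable {R}

theorem subsingleton_extM_of_lt_gradeR {M : ModuleCat.{u} R} {i : ℕ} (h : (i : ℕ∞) < gradeR R M) :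
    Subsingleton (ExtM R M (ModuleCat.of R R) i) :=
  not_not.1 fun hi ↦ h.not_ge (sInf_le ⟨i, hi, rfl⟩)

theorem subsingleton_dual_of_gradeR_pos {M : ModuleCat.{u} R} (h : 0 < gradeR R M) :
    Subsingleton (Module.Dual R ↥M) :=
  (subsingleton_extM_zero_iff M _).1 (subsingleton_extM_of_lt_gradeR h)

theorem subsingleton_ext_of_lt_gradeR {M : ModuleCat.{u} R} {n i : ℕ}
    (h : (n : ℕ∞) < gradeR R M) (hi : i + 1 ≤ n) :
    Subsingleton (Abelian.Ext.{u} M (ModuleCat.of R R) (i + 1)) :=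
  (subsingleton_extM_succ_iff M _ i).1
    (subsingleton_extM_of_lt_gradeR (h.trans_le' (Nat.cast_le.2 hi)))

theorem IsSemidualizing.subsingleton_linearMap_of_gradeR_pos [IsNoetherianRing R]
    {C M : ModuleCat.{u} R} [Module.Finite R ↥M] (hC : IsSemidualizing R C)
    (h : 0 < gradeR R M) : Subsingleton (↥M →ₗ[R] ↥C) :=
  have : Module.Finite R ↥C := hC.1
  have := subsingleton_dual_of_gradeR_pos h
  subsingleton_linearMap_of_subsingleton_dual hC.bijective_lsmul

theorem isTotallyCReflexive_of_gcdim_eq_zero {C M : ModuleCat.{u} R} (h : gcdim R C M = 0) :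
    IsTotallyCReflexive R C M := by
  obtain ⟨n, hn, hn0⟩ := ENat.sInf_eq_zero.1 h
  obtain rfl : n = 0 := Nat.cast_eq_zero.1 hn0
  exact hn

end Grade

theorem statement12_general [IsNoetherianRing R]
    (C : ModuleCat.{u} R) (hC : IsSemidualizing R C)
    (n : ℕ) (hn : 0 < n)
    (M : ModuleCat.{u} R) (hMfin : Module.Finite R ↥M) (hM0 : Nontrivial ↥M)
    (hgrade : (n : ℕ∞) < gradeR R M) :
    ∀ S T : ModuleCat.{u} R, IsNthSyzygy R (n - 1) M S →
      IsTransposeC R C S T →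
        ¬ IsGCPerfect R C T ∧ gradeR R T = 0 := by
  obtain ⟨m, rfl⟩ := Nat.exists_eq_add_one.2 hn
  intro S T hS hT
  have hext (i : ℕ) (hi : i ≤ m) := subsingleton_ext_of_lt_gradeR hgrade (Nat.succ_le_succ hi)
  have : Subsingleton (↥M →ₗ[R] ↥C) := hC.subsingleton_linearMap_of_gradeR_pos (pos_of_gt hgrade)
  have hMC : HigherExtVanish R ↥C (↥M →ₗ[R] ↥C) := .of_subsingleton_right
  obtain ⟨P₁, P₀, d, π, q, hdπ, hdq, hq⟩ := hT.exists_exact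
  have hL : IsNthSyzygy R (m + 1) M (ModuleCat.of R (LinearMap.range d)) := ⟨S, hS, hdπ.isSyzygyOf⟩
  have not_reflexive : ¬ IsWeaklyCReflexive R ↥C (LinearMap.range d) := fun h ↦ not_subsingleton ↥M
    (hL.isWeaklyCReflexive hC hMC (fun i hi ↦ hext i (Nat.le_of_lt_succ hi)) h).subsingleton
  have shortExact := hdπ.isShortExact
  obtain ⟨_, _, ⟨_, -⟩, -, _, -⟩ := hdπ
  have grade_T : gradeR R T = 0 := by
    by_contra h
    have := subsingleton_dual_of_gradeR_pos (pos_iff_ne_zero.2 h)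
    exact not_reflexive (isWeaklyCReflexive_range_of_subsingleton_dual hC hdq hq)
  refine ⟨fun hperf ↦ not_reflexive ?_, grade_T⟩
  have hTC := (isTotallyCReflexive_of_gcdim_eq_zero (hperf.2.symm.trans grade_T)).2.2.1
  exact isWeaklyCReflexive_range_of_higherExtVanish hC hdq hq
    (hS.surjective_lcomp hC hMC hext shortExact) ((higherExtVanish_iff_extM T C).2 hTC)

/-- over a Noetherian local ring, if `grade_R(M) > n > 0` and `M ≠ 0`
is finite, then `T_n^C(M) = Tr_C(Ω^{n-1} M)` is not `G_C`-perfect and has grade `0`. -/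
theorem statement12 [IsLocalRing R] [IsNoetherianRing R]
    (C : ModuleCat.{u} R) (hC : IsSemidualizing R C)
    (n : ℕ) (hn : 0 < n)
    (M : ModuleCat.{u} R) (hMfin : Module.Finite R ↥M) (hM0 : Nontrivial ↥M)
    (hgrade : (n : ℕ∞) < gradeR R M) :
    ∀ S T : ModuleCat.{u} R, IsNthSyzygy R (n - 1) M S →
      IsTransposeC R C S T →
        ¬ IsGCPerfect R C T ∧ gradeR R T = 0 :=
  statement12_general R C hC n hn M hMfin hM0 hgrade

end
end

section
/- Let M be a finite R-module and let n, t be integers. The following are equivalent: (i) M is reduced G_C-perfect of G_C-dimension n and Ext_R^n(M,C) is G_C-perfect of G_C-dimension n+t−1; (ii) Tr_C(M) is reduced G_C-perfect of G_C-dimension t and Ext_R^t(Tr_C(M),C) is G_C-perfect of G_C-dimension n+t−1. -/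
open CategoryTheory TensorProduct

noncomputable section

universe u

variable (R : Type u) [CommRing R]

/-!
A transpose `T` of `M` is the cokernel of the dual of a presentation `G₁ → G₀ → M → 0`, and if one
allows `G₁` and `G₀` to be totally `C`-reflexive instead of projective, then `M` is in turn a
transpose of `T`. So it suffices to pass from `M` to `T`.

Suppose that `M` is reduced `G_C`-perfect of `G_C`-dimension `n + 1` and put
`E = Ext^{n+1}(M, C)`. As `Ext^i(M, C) = 0` for `0 < i ≤ n`, replacing `M` by its syzygies embeds
`T` in a coresolution by `n` totally `C`-reflexive modules, and the last cokernel is an extension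
of a totally `C`-reflexive module by `E`. Dimension shifting gives `Ext^i(T, C) ≅ Ext^{i+n}(E, C)`
for `i > 0` and `G_C-dim E = G_C-dim T + n`, while `Ext^i(E, C) = 0` for `i ≤ n`. Since the grade of
a finite module can be computed by `Ext^i(-, C)`, this says that `T` is reduced `G_C`-perfect of
`G_C`-dimension `t` if and only if `E` is `G_C`-perfect of `G_C`-dimension `t + n`.

In that case `Ext^t(T, C) ≅ Ext^{t+n}(E, C)` is the dual of the `G_C`-perfect module `E`. That such
duals are `G_C`-perfect of the same dimension is the previous paragraph with `E` in place of `M`,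
for then the transpose has `G_C`-dimension `1`.

For the grade, the natural map `Ext^j(E, Hom(C, C)) → Hom(C, Ext^j(E, C))` is bijective when
`Ext^i(E, C) = 0` for `i < j`, and `Hom(C, N) = 0` only for `N = 0` because `C` is faithful.
-/

section Comparison

open Limits CochainComplex.HomComplex

variable {R} {X Y : ModuleCat.{u} R} (P : ProjectiveResolution X)

namespace ExtM

theorem extMk_zero_eq_zero_iff (f : P.complex.X 0 ⟶ Y) (hf : P.complex.d 1 0 ≫ f = 0) :
    P.extMk f 1 rfl hf = 0 ↔ f = 0 := by
  rw [← P.extEquivCohomologyClass.apply_eq_iff_eq,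
    ProjectiveResolution.extEquivCohomologyClass_extMk,
    ProjectiveResolution.extEquivCohomologyClass_zero, CohomologyClass.mk_eq_zero_iff,
    Cocycle.toSingleMk_mem_coboundaries_iff _ _ _ _ _ 1 (by simp)]
  have hzero : IsZero (P.cochainComplex.X 1) := CochainComplex.isZero_of_isStrictlyLE _ 0 _
  constructor
  · rintro ⟨g, hg⟩
    rw [hzero.eq_of_src g 0, comp_zero] at hg
    rw [← cancel_epi (P.cochainComplexXIso (-((0 : ℕ) : ℤ)) 0 rfl).hom]
    simpa using hg.symm
  · rintro rfl
    exact ⟨0, by simp⟩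

theorem extMk_eq_zero_iff_exists {n : ℕ} (f : P.complex.X n ⟶ Y)
    (hf : P.complex.d (n + 1) n ≫ f = 0) :
    P.extMk f (n + 1) rfl hf = 0 ↔
      ∃ g : P.complex.X (n - 1) ⟶ Y, P.complex.d n (n - 1) ≫ g = f := by
  cases n with
  | zero => exact (extMk_zero_eq_zero_iff P f hf).trans (by simp [eq_comm])
  | succ n => exact P.extMk_eq_zero_iff f _ rfl hf n rfl

theorem extMk_smul {n : ℕ} (r : R) {f : P.complex.X n ⟶ Y}
    (hf : P.complex.d (n + 1) n ≫ f = 0) :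
    P.extMk (r • f) (n + 1) rfl (by rw [Linear.comp_smul, hf, smul_zero]) =
      r • P.extMk f (n + 1) rfl hf := by
  simp only [Abelian.Ext.smul_eq_comp_mk₀, P.extMk_comp_mk₀, Linear.comp_smul, Category.comp_id]

/-- The cochain complex `Hom(P, Y)` around degree `n`. At `n = 0` the truncated index `n - 1`
gives the zero map from degree `0` to itself, which is also the convention of
`ComplexShape.prev`. -/
abbrev homShortComplex (Y : ModuleCat.{u} R) (n : ℕ) : ShortComplex (ModuleCat.{u} R) :=
  (P.complex.linearYonedaObj R Y).sc' (n - 1) n (n + 1)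

/-- The map sending a cocycle of `Hom(P, Y)` to its class in `Abelian.Ext`. -/
def cocycleClass (Y : ModuleCat.{u} R) (n : ℕ) :
    LinearMap.ker (homShortComplex P Y n).g.hom →ₗ[R] Abelian.Ext X Y n where
  toFun f := P.extMk (f.1 : P.complex.X n ⟶ Y) (n + 1) rfl f.2
  map_add' f g := (P.add_extMk _ _ _ _ f.2 g.2).symm
  map_smul' r f := extMk_smul P r f.2

theorem cocycleClass_surjective (n : ℕ) : Function.Surjective (cocycleClass P Y n) := fun x ↦
  have ⟨f, hf, hx⟩ := P.extMk_surjective x (n + 1) rfl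
  ⟨⟨f, hf⟩, hx⟩

theorem ker_cocycleClass (n : ℕ) :
    LinearMap.ker (cocycleClass P Y n) =
      LinearMap.range (homShortComplex P Y n).moduleCatToCycles := by
  ext ⟨f, hf⟩
  refine (extMk_eq_zero_iff_exists P f hf).trans ⟨?_, ?_⟩
  · rintro ⟨g, hg⟩
    exact ⟨g, Subtype.ext hg⟩
  · rintro ⟨g, hg⟩
    exact ⟨g, congrArg Subtype.val hg⟩

/-- The comparison between `Ext` as a left derived functor and `Abelian.Ext`, for which Mathlib has
long exact sequences. -/
def linearEquivExt (X Y : ModuleCat.{u} R) (n : ℕ) : ExtM R X Y n ≃ₗ[R] Abelian.Ext X Y n :=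
  let P := ProjectiveResolution.of X
  let homologyIso : ExtM R X Y n ≅ (homShortComplex P Y n).moduleCatLeftHomologyData.H :=
    P.isoExt n Y ≪≫
      ShortComplex.homologyMapIso (HomologicalComplex.isoSc' _ (n - 1) n (n + 1)
        (by cases n <;> simp) (by simp)) ≪≫
      (homShortComplex P Y n).moduleCatHomologyIso
  homologyIso.toLinearEquiv ≪≫ₗ
    Submodule.quotEquivOfEq _ _ (ker_cocycleClass P n).symm ≪≫ₗ
    (cocycleClass P Y n).quotKerEquivOfSurjective (cocycleClass_surjective P n)

end ExtM

end Comparison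

section ShortExact

variable {R}

namespace ExtM

theorem subsingleton_iff {X Y : ModuleCat.{u} R} {n : ℕ} :
    Subsingleton (ExtM R X Y n) ↔ Subsingleton (Abelian.Ext X Y n) :=
  (linearEquivExt X Y n).toEquiv.subsingleton_congr

/-- `Ext⁰(X, Y)` is `Hom(X, Y)`. -/
def linearEquivHom (X Y : ModuleCat.{u} R) : ExtM R X Y 0 ≃ₗ[R] (X →ₗ[R] Y) :=
  linearEquivExt X Y 0 ≪≫ₗ Abelian.Ext.linearEquiv₀ (R := R) ≪≫ₗ ModuleCat.homLinearEquiv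

/-- Functoriality of `Ext` in the first variable, for linear equivalences. -/
def congrLeft {A B : ModuleCat.{u} R} (e : A ≃ₗ[R] B) (Y : ModuleCat.{u} R) (i : ℕ) :
    ExtM R A Y i ≃ₗ[R] ExtM R B Y i :=
  (((Ext R (ModuleCat.{u} R) i).mapIso e.toModuleIso.symm.op).app Y).toLinearEquiv

/-- Functoriality of `Ext` in the second variable, for linear equivalences. -/
def congrRight (A : ModuleCat.{u} R) {X Y : ModuleCat.{u} R} (e : X ≃ₗ[R] Y) (i : ℕ) :
    ExtM R A X i ≃ₗ[R] ExtM R A Y i :=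
  (((Ext R (ModuleCat.{u} R) i).obj (.op A)).mapIso e.toModuleIso).toLinearEquiv

theorem subsingleton_congr {A B : ModuleCat.{u} R} (e : A ≃ₗ[R] B) {Y : ModuleCat.{u} R} {i : ℕ} :
    Subsingleton (ExtM R A Y i) ↔ Subsingleton (ExtM R B Y i) :=
  (congrLeft e Y i).toEquiv.subsingleton_congr

theorem subsingleton_of_projective (A Y : ModuleCat.{u} R) [Module.Projective R A] {i : ℕ}
    (hi : 0 < i) : Subsingleton (ExtM R A Y i) := by
  obtain ⟨j, rfl⟩ := Nat.exists_eq_add_one.2 hi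
  have : Projective A := (IsProjective.iff_projective (R := R) (P := A)).1 inferInstance
  exact subsingleton_iff.2 (Abelian.Ext.subsingleton_of_projective _ _ _)

theorem subsingleton_of_retract {A B : ModuleCat.{u} R} {s : A →ₗ[R] B} {r : B →ₗ[R] A}
    (hrs : r ∘ₗ s = LinearMap.id) {Y : ModuleCat.{u} R} {i : ℕ}
    (h : Subsingleton (ExtM R B Y i)) : Subsingleton (ExtM R A Y i) := by
  rw [subsingleton_iff] at *
  have hid : ModuleCat.ofHom s ≫ ModuleCat.ofHom r = 𝟙 A := by
    rw [← ModuleCat.ofHom_comp, hrs, ModuleCat.ofHom_id]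
  refine subsingleton_of_forall_eq 0 fun x ↦ ?_
  rw [← Abelian.Ext.mk₀_id_comp x, ← hid, ← Abelian.Ext.mk₀_comp_mk₀_assoc,
    h.elim ((Abelian.Ext.mk₀ (ModuleCat.ofHom r)).comp x (zero_add i)) 0, Abelian.Ext.comp_zero]

instance finite [IsNoetherianRing R] (X Y : ModuleCat.{u} R) [Module.Finite R X]
    [Module.Finite R Y] (i : ℕ) : Module.Finite R (ExtM R X Y i) :=
  Module.Finite.equiv (linearEquivExt X Y i).symm

end ExtM

/-- The dual `M^C = Hom(M, C)` as an object of `ModuleCat R`. -/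
abbrev cDual (C M : ModuleCat.{u} R) : ModuleCat.{u} R := .of R (M →ₗ[R] C)

/-- The dual `f^C : B^C → A^C` of a linear map `f : A → B`. -/
abbrev cDualMap (C : ModuleCat.{u} R) {A B : ModuleCat.{u} R} (f : A →ₗ[R] B) :
    cDual C B →ₗ[R] cDual C A :=
  f.lcomp R C

/-- A short exact sequence `0 → A → B → X → 0` given by linear maps, the form in which short
exact sequences occur in `gcdimLE`. -/
structure IsShortExact_s13 {A B X : ModuleCat.{u} R} (f : A →ₗ[R] B) (g : B →ₗ[R] X) : Prop where
  injective : Function.Injective f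
  exact : Function.Exact f g
  surjective : Function.Surjective g

namespace IsShortExact_s13

variable {A B X : ModuleCat.{u} R} {f : A →ₗ[R] B} {g : B →ₗ[R] X}

theorem of_surjective (hg : Function.Surjective g) :
    IsShortExact_s13 (A := .of R (LinearMap.ker g)) (LinearMap.ker g).subtype g :=
  ⟨Subtype.val_injective, g.exact_subtype_ker_map, hg⟩

theorem inl_snd (A B : ModuleCat.{u} R) :
    IsShortExact_s13 (B := .of R (A × B)) (LinearMap.inl R A B) (LinearMap.snd R A B) :=
  ⟨LinearMap.inl_injective, Function.Exact.inl_snd, LinearMap.snd_surjective⟩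

theorem comp_equiv_left {A' : ModuleCat.{u} R} (h : IsShortExact_s13 f g) (e : A' ≃ₗ[R] A) :
    IsShortExact_s13 (f ∘ₗ e.toLinearMap) g :=
  ⟨h.injective.comp e.injective,
    (Function.Surjective.comp_exact_iff_exact e.surjective).2 h.exact, h.surjective⟩

theorem comp_equiv_right {X' : ModuleCat.{u} R} (h : IsShortExact_s13 f g) (e : X ≃ₗ[R] X') :
    IsShortExact_s13 f (e.toLinearMap ∘ₗ g) :=
  ⟨h.injective, h.exact.comp_injective _ e.injective (map_zero e),
    e.surjective.comp h.surjective⟩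

theorem comp_equiv_middle {B' : ModuleCat.{u} R} (h : IsShortExact_s13 f g) (e : B ≃ₗ[R] B') :
    IsShortExact_s13 (e.toLinearMap ∘ₗ f) (g ∘ₗ e.symm.toLinearMap) := by
  refine ⟨e.injective.comp h.injective, fun b ↦ ?_, h.surjective.comp e.symm.surjective⟩
  simp [h.exact (e.symm b), e.eq_symm_apply]

/-- The short exact sequence as a short complex of `ModuleCat R`. -/
abbrev shortComplex (h : IsShortExact_s13 f g) : ShortComplex (ModuleCat.{u} R) :=
  .mk (ModuleCat.ofHom f) (ModuleCat.ofHom g) (by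
    rw [← ModuleCat.ofHom_comp, h.exact.linearMap_comp_eq_zero, ModuleCat.ofHom_zero])

theorem shortExact_s13 (h : IsShortExact_s13 f g) : h.shortComplex.ShortExact :=
  ModuleCat.shortComplex_shortExact _ h.exact h.injective h.surjective

section ExtVanishing

variable (h : IsShortExact_s13 f g) {N : ModuleCat.{u} R} {i : ℕ}
include h

theorem subsingleton_ext_left (hB : Subsingleton (ExtM R B N i))
    (hX : Subsingleton (ExtM R X N (i + 1))) : Subsingleton (ExtM R A N i) := by
  rw [ExtM.subsingleton_iff] at *
  refine subsingleton_of_forall_eq 0 fun x ↦ ?_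
  obtain ⟨y, rfl⟩ := Abelian.Ext.contravariant_sequence_exact₁ h.shortExact_s13 N x
    (add_comm 1 i) (hX.elim _ _)
  rw [hB.elim y 0, Abelian.Ext.comp_zero]

theorem subsingleton_ext_middle (hX : Subsingleton (ExtM R X N i))
    (hA : Subsingleton (ExtM R A N i)) : Subsingleton (ExtM R B N i) := by
  rw [ExtM.subsingleton_iff] at *
  refine subsingleton_of_forall_eq 0 fun x ↦ ?_
  obtain ⟨y, rfl⟩ := Abelian.Ext.contravariant_sequence_exact₂ h.shortExact_s13 N x (hA.elim _ _)
  rw [hX.elim y 0, Abelian.Ext.comp_zero]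

theorem subsingleton_ext_right (hA : Subsingleton (ExtM R A N i))
    (hB : Subsingleton (ExtM R B N (i + 1))) : Subsingleton (ExtM R X N (i + 1)) := by
  rw [ExtM.subsingleton_iff] at *
  refine subsingleton_of_forall_eq 0 fun x ↦ ?_
  obtain ⟨y, rfl⟩ := Abelian.Ext.contravariant_sequence_exact₃ h.shortExact_s13 N x (hB.elim _ _)
    (add_comm 1 i)
  rw [hA.elim y 0, Abelian.Ext.comp_zero]

theorem nonempty_ext_equiv_succ (hB : Subsingleton (ExtM R B N i))
    (hB' : Subsingleton (ExtM R B N (i + 1))) :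
    Nonempty (ExtM R A N i ≃ₗ[R] ExtM R X N (i + 1)) := by
  rw [ExtM.subsingleton_iff] at hB hB'
  let δ : Abelian.Ext A N i →ₗ[R] Abelian.Ext X N (i + 1) :=
    h.shortExact_s13.extClass.precompOfLinear R N (add_comm 1 i)
  have hinj : Function.Injective δ := (injective_iff_map_eq_zero δ).2 fun x hx ↦ by
    obtain ⟨y, rfl⟩ :=
      Abelian.Ext.contravariant_sequence_exact₁ h.shortExact_s13 N x (add_comm 1 i) hx
    rw [hB.elim y 0, Abelian.Ext.comp_zero]
  have hsurj : Function.Surjective δ := fun x ↦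
    Abelian.Ext.contravariant_sequence_exact₃ h.shortExact_s13 N x (hB'.elim _ _) (add_comm 1 i)
  exact ⟨ExtM.linearEquivExt A N i ≪≫ₗ LinearEquiv.ofBijective δ ⟨hinj, hsurj⟩ ≪≫ₗ
    (ExtM.linearEquivExt X N (i + 1)).symm⟩

theorem nonempty_ext_equiv_left (hX : Subsingleton (ExtM R X N i))
    (hX' : Subsingleton (ExtM R X N (i + 1))) :
    Nonempty (ExtM R B N i ≃ₗ[R] ExtM R A N i) := by
  rw [ExtM.subsingleton_iff] at hX hX'
  let r : Abelian.Ext B N i →ₗ[R] Abelian.Ext A N i :=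
    (Abelian.Ext.mk₀ (ModuleCat.ofHom f)).precompOfLinear R N (zero_add i)
  have hinj : Function.Injective r := (injective_iff_map_eq_zero r).2 fun x hx ↦ by
    obtain ⟨y, rfl⟩ := Abelian.Ext.contravariant_sequence_exact₂ h.shortExact_s13 N x hx
    rw [hX.elim y 0, Abelian.Ext.comp_zero]
  have hsurj : Function.Surjective r := fun x ↦
    Abelian.Ext.contravariant_sequence_exact₁ h.shortExact_s13 N x (add_comm 1 i) (hX'.elim _ _)
  exact ⟨ExtM.linearEquivExt B N i ≪≫ₗ LinearEquiv.ofBijective r ⟨hinj, hsurj⟩ ≪≫ₗ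
    (ExtM.linearEquivExt A N i).symm⟩

end ExtVanishing

section Dual

variable (h : IsShortExact_s13 f g) {N : ModuleCat.{u} R}
include h

variable (N) in
theorem exists_connecting : ∃ δ : cDual N A →ₗ[R] ExtM R X N 1,
    Function.Exact (cDualMap N f) δ ∧ (Subsingleton (ExtM R B N 1) → Function.Surjective δ) := by
  let e : (A →ₗ[R] N) ≃ₗ[R] Abelian.Ext A N 0 :=
    ((Abelian.Ext.linearEquiv₀ (R := R)).trans ModuleCat.homLinearEquiv).symm
  let δ : (A →ₗ[R] N) →ₗ[R] Abelian.Ext X N 1 :=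
    h.shortExact_s13.extClass.precompOfLinear R N rfl ∘ₗ e.toLinearMap
  have hδ : Function.Exact (cDualMap N f) δ := fun φ ↦ by
    constructor
    · intro hφ
      obtain ⟨y, hy⟩ :=
        Abelian.Ext.contravariant_sequence_exact₁ h.shortExact_s13 N (e φ) (add_zero 1) hφ
      obtain ⟨ψ, rfl⟩ := (Abelian.Ext.mk₀_bijective _ _).2 y
      rw [Abelian.Ext.mk₀_comp_mk₀] at hy
      exact ⟨ψ.hom, congrArg ModuleCat.Hom.hom ((Abelian.Ext.mk₀_bijective _ _).1 hy)⟩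
    · rintro ⟨ψ, rfl⟩
      have hcomp : e (cDualMap N f ψ) = (Abelian.Ext.mk₀ h.shortComplex.f).comp
          (Abelian.Ext.mk₀ (ModuleCat.ofHom ψ)) (zero_add 0) :=
        (Abelian.Ext.mk₀_comp_mk₀ _ _).symm
      change h.shortExact_s13.extClass.comp (e (cDualMap N f ψ)) (add_zero 1) = 0
      rw [hcomp, ← Abelian.Ext.comp_assoc (h₁₂ := add_zero 1) (h₂₃ := add_zero 0) (h := rfl),
        h.shortExact_s13.extClass_comp, Abelian.Ext.zero_comp]
  let b := (ExtM.linearEquivExt X N 1).symm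
  refine ⟨b.toLinearMap ∘ₗ δ, (Function.Injective.comp_exact_iff_exact b.injective).2 hδ,
    fun hB ↦ b.surjective.comp fun x ↦ ?_⟩
  rw [ExtM.subsingleton_iff] at hB
  obtain ⟨y, hy⟩ := Abelian.Ext.contravariant_sequence_exact₃ h.shortExact_s13 N x (hB.elim _ _)
    (add_zero 1)
  refine ⟨e.symm y, ?_⟩
  change h.shortExact_s13.extClass.comp (e (e.symm y)) (add_zero 1) = x
  rw [e.apply_symm_apply, hy]

theorem cDualMap_surjective (hX : Subsingleton (ExtM R X N 1)) :
    Function.Surjective (cDualMap N f) := by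
  obtain ⟨δ, hδ, -⟩ := h.exists_connecting N
  exact fun φ ↦ (hδ φ).1 (hX.elim _ _)

theorem subsingleton_ext_one_of_cDualMap_surjective (hB : Subsingleton (ExtM R B N 1))
    (hf : Function.Surjective (cDualMap N f)) : Subsingleton (ExtM R X N 1) := by
  obtain ⟨δ, hδ, hsurj⟩ := h.exists_connecting N
  refine subsingleton_of_forall_eq 0 fun x ↦ ?_
  obtain ⟨φ, rfl⟩ := hsurj hB x
  exact (hδ φ).2 (hf φ)

theorem dual (hX : Subsingleton (ExtM R X N 1)) :
    IsShortExact_s13 (cDualMap N g) (cDualMap N f) :=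
  ⟨LinearMap.lcomp_injective_of_surjective g h.surjective,
    LinearMap.exact_lcomp_of_exact_of_surjective N h.exact h.surjective, h.cDualMap_surjective hX⟩

end Dual

end IsShortExact_s13

end ShortExact

section TotallyReflexive

variable {R} {C A B X : ModuleCat.{u} R} {f : A →ₗ[R] B} {g : B →ₗ[R] X}

theorem cDualMap_cDualMap_bidualityMap (C : ModuleCat.{u} R) (f : A →ₗ[R] B) (a : A) :
    cDualMap C (cDualMap C f) (bidualityMap R C A a) = bidualityMap R C B (f a) :=
  rfl

namespace IsShortExact_s13

theorem bijective_bidualityMap_middle (h : IsShortExact_s13 f g)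
    (hdd : IsShortExact_s13 (cDualMap C (cDualMap C f)) (cDualMap C (cDualMap C g)))
    (hA : Function.Bijective (bidualityMap R C A)) (hX : Function.Bijective (bidualityMap R C X)) :
    Function.Bijective (bidualityMap R C B) := by
  refine LinearMap.bijective_of_surjective_of_bijective_of_bijective_of_injective
    (0 : Unit →ₗ[R] A) f g (0 : X →ₗ[R] Unit)
    (0 : Unit →ₗ[R] cDual C (cDual C A)) (cDualMap C (cDualMap C f)) (cDualMap C (cDualMap C g))
    (0 : cDual C (cDual C X) →ₗ[R] Unit) 0 (bidualityMap R C A) _ (bidualityMap R C X) 0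
    (by simp) rfl rfl rfl ?_ h.exact ?_ ?_ hdd.exact ?_ (fun x ↦ ⟨x, rfl⟩) hA hX (fun x y _ ↦ rfl)
  · exact (LinearMap.exact_zero_iff_injective Unit f).2 h.injective
  · exact (LinearMap.exact_zero_iff_surjective Unit g).2 h.surjective
  · exact (LinearMap.exact_zero_iff_injective Unit (cDualMap C (cDualMap C f))).2 hdd.injective
  · exact (LinearMap.exact_zero_iff_surjective Unit (cDualMap C (cDualMap C g))).2 hdd.surjective

theorem bijective_bidualityMap_left (h : IsShortExact_s13 f g)
    (hdd : IsShortExact_s13 (cDualMap C (cDualMap C f)) (cDualMap C (cDualMap C g)))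
    (hB : Function.Bijective (bidualityMap R C B))
    (hX : Function.Injective (bidualityMap R C X)) :
    Function.Bijective (bidualityMap R C A) :=
  LinearMap.bijective_of_bijective_of_injective_of_left_exact f g (cDualMap C (cDualMap C f))
    (cDualMap C (cDualMap C g)) _ _ (bidualityMap R C X) rfl rfl h.exact hdd.exact hB hX h.injective
    hdd.injective

end IsShortExact_s13

namespace IsTotallyCReflexive

theorem finite (h : IsTotallyCReflexive R C A) : Module.Finite R A := h.1

theorem bijective (h : IsTotallyCReflexive R C A) : Function.Bijective (bidualityMap R C A) :=
  h.2.1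

theorem subsingleton_ext (h : IsTotallyCReflexive R C A) {i : ℕ} (hi : 0 < i) :
    Subsingleton (ExtM R A C i) :=
  h.2.2.1 i hi

theorem subsingleton_ext_cDual (h : IsTotallyCReflexive R C A) {i : ℕ} (hi : 0 < i) :
    Subsingleton (ExtM R (cDual C A) C i) :=
  h.2.2.2 i hi

/-- The biduality isomorphism of a totally `C`-reflexive module. -/
def bidualityEquiv (h : IsTotallyCReflexive R C A) : A ≃ₗ[R] cDual C (cDual C A) :=
  LinearEquiv.ofBijective (bidualityMap R C A) h.bijective

theorem of_retract {s : A →ₗ[R] B} {r : B →ₗ[R] A} (hrs : r ∘ₗ s = LinearMap.id)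
    (h : IsTotallyCReflexive R C B) : IsTotallyCReflexive R C A := by
  have hdual : cDualMap C s ∘ₗ cDualMap C r = LinearMap.id :=
    LinearMap.ext fun φ ↦ by simp [LinearMap.lcomp_apply', LinearMap.comp_assoc, hrs]
  have hrs' : Function.LeftInverse r s := LinearMap.congr_fun hrs
  have hfin := h.finite
  refine ⟨Module.Finite.of_surjective r hrs'.surjective, ⟨?_, fun ξ ↦ ?_⟩,
    fun i hi ↦ ExtM.subsingleton_of_retract hrs (h.subsingleton_ext hi),
    fun i hi ↦ ExtM.subsingleton_of_retract hdual (h.subsingleton_ext_cDual hi)⟩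
  · refine .of_comp (f := cDualMap C (cDualMap C s)) ?_
    exact h.bijective.injective.comp hrs'.injective
  · obtain ⟨b, hb⟩ := h.bijective.surjective (cDualMap C (cDualMap C s) ξ)
    refine ⟨r b, ?_⟩
    rw [← cDualMap_cDualMap_bidualityMap, hb]
    exact LinearMap.ext fun φ ↦ congrArg ξ (LinearMap.congr_fun hdual φ)

theorem of_linearEquiv (e : A ≃ₗ[R] B) (h : IsTotallyCReflexive R C B) :
    IsTotallyCReflexive R C A :=
  h.of_retract (s := e.toLinearMap) (r := e.symm.toLinearMap) e.symm_comp

theorem middle (h : IsShortExact_s13 f g) (hA : IsTotallyCReflexive R C A)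
    (hX : IsTotallyCReflexive R C X) : IsTotallyCReflexive R C B := by
  have hd := h.dual (hX.subsingleton_ext one_pos)
  have hdd := hd.dual (hA.subsingleton_ext_cDual one_pos)
  have := hA.finite
  have := hX.finite
  exact ⟨.of_exact h.exact h.surjective,
    h.bijective_bidualityMap_middle hdd hA.bijective hX.bijective,
    fun i hi ↦ h.subsingleton_ext_middle (hX.subsingleton_ext hi) (hA.subsingleton_ext hi),
    fun i hi ↦ hd.subsingleton_ext_middle (hA.subsingleton_ext_cDual hi)
      (hX.subsingleton_ext_cDual hi)⟩

theorem left [IsNoetherianRing R] (h : IsShortExact_s13 f g) (hB : IsTotallyCReflexive R C B)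
    (hX : IsTotallyCReflexive R C X) : IsTotallyCReflexive R C A := by
  have hd := h.dual (hX.subsingleton_ext one_pos)
  have hdd_surj : Function.Surjective (cDualMap C (cDualMap C g)) := by
    refine .of_comp (g := bidualityMap R C B) ?_
    exact hX.bijective.surjective.comp h.surjective
  have hA1 : Subsingleton (ExtM R (cDual C A) C 1) :=
    hd.subsingleton_ext_one_of_cDualMap_surjective (hB.subsingleton_ext_cDual one_pos) hdd_surj
  have := hB.finite
  refine ⟨.of_injective f h.injective,
    h.bijective_bidualityMap_left (hd.dual hA1) hB.bijective hX.bijective.injective,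
    fun i hi ↦ h.subsingleton_ext_left (hB.subsingleton_ext hi) (hX.subsingleton_ext i.succ_pos),
    fun i hi ↦ ?_⟩
  obtain ⟨i, rfl⟩ := Nat.exists_eq_add_one.2 hi
  obtain rfl | hi' := i.eq_zero_or_pos
  · exact hA1
  · exact hd.subsingleton_ext_right (hX.subsingleton_ext_cDual hi')
      (hB.subsingleton_ext_cDual i.succ_pos)

theorem dual [IsNoetherianRing R] [Module.Finite R C] (h : IsTotallyCReflexive R C A) :
    IsTotallyCReflexive R C (cDual C A) := by
  have := h.finite
  have hbid : ⇑(bidualityMap R C (cDual C A)) = h.bidualityEquiv.congrLeft C R :=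
    funext fun φ ↦ LinearMap.ext fun ξ ↦ by
      obtain ⟨a, rfl⟩ := h.bidualityEquiv.surjective ξ
      exact congrArg φ (h.bidualityEquiv.symm_apply_apply a).symm
  exact ⟨inferInstanceAs (Module.Finite R (A →ₗ[R] C)), hbid ▸ LinearEquiv.bijective _,
    fun i hi ↦ h.subsingleton_ext_cDual hi,
    fun i hi ↦ (ExtM.subsingleton_congr h.bidualityEquiv).1 (h.subsingleton_ext hi)⟩

theorem of_subsingleton [Subsingleton A] : IsTotallyCReflexive R C A := by
  have : Subsingleton (cDual C A) := inferInstanceAs (Subsingleton (A →ₗ[R] C))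
  have : Subsingleton (cDual C (cDual C A)) :=
    inferInstanceAs (Subsingleton (cDual C A →ₗ[R] C))
  exact ⟨inferInstance, ⟨Function.injective_of_subsingleton _, fun ξ ↦ ⟨0, Subsingleton.elim _ _⟩⟩,
    fun i hi ↦ ExtM.subsingleton_of_projective A C hi,
    fun i hi ↦ ExtM.subsingleton_of_projective (cDual C A) C hi⟩

end IsTotallyCReflexive

namespace IsSemidualizing

theorem finite (hC : IsSemidualizing R C) : Module.Finite R C := hC.1

theorem subsingleton_ext (hC : IsSemidualizing R C) {i : ℕ} (hi : 0 < i) :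
    Subsingleton (ExtM R C C i) :=
  hC.2.2 i hi

/-- The homothety isomorphism of a semidualizing module. -/
def homothetyEquiv (hC : IsSemidualizing R C) : R ≃ₗ[R] (C →ₗ[R] C) :=
  LinearEquiv.ofBijective (LinearMap.toSpanSingleton R (C →ₗ[R] C) LinearMap.id) hC.2.1

theorem isTotallyCReflexive_ring (hC : IsSemidualizing R C) :
    IsTotallyCReflexive R C (.of R R) := by
  let ev : cDual C (.of R R) ≃ₗ[R] C := LinearMap.ringLmapEquivSelf R R C
  have hbid : ⇑(bidualityMap R C (.of R R)) = (hC.homothetyEquiv ≪≫ₗ ev.symm.congrLeft C R) := by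
    ext r φ
    change φ r = r • φ (1 : R)
    rw [← map_smul, smul_eq_mul, mul_one]
  exact ⟨inferInstanceAs (Module.Finite R R), hbid ▸ LinearEquiv.bijective _,
    fun i hi ↦ ExtM.subsingleton_of_projective (.of R R) C hi,
    fun i hi ↦ (ExtM.subsingleton_congr ev).2 (hC.subsingleton_ext hi)⟩

theorem isTotallyCReflexive_pi (hC : IsSemidualizing R C) (n : ℕ) :
    IsTotallyCReflexive R C (.of R (Fin n → R)) := by
  induction n with
  | zero => exact .of_subsingleton
  | succ n ih =>
    exact .of_linearEquiv (B := .of R (R × (Fin n → R)))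
      (Fin.consLinearEquiv R fun _ : Fin (n + 1) ↦ R).symm
      (.middle (.inl_snd (.of R R) (.of R (Fin n → R))) hC.isTotallyCReflexive_ring ih)

theorem isTotallyCReflexive_of_projective (hC : IsSemidualizing R C) [Module.Finite R A]
    [Module.Projective R A] : IsTotallyCReflexive R C A := by
  obtain ⟨n, p, s, -, -, hps⟩ := Module.Finite.exists_comp_eq_id_of_projective R A
  exact (hC.isTotallyCReflexive_pi n).of_retract (s := s) (r := p) hps

end IsSemidualizing

end TotallyReflexive

section FiberProduct

variable {R} {A B X K Y : ModuleCat.{u} R} {f : A →ₗ[R] B} {g : B →ₗ[R] X}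

/-- The fibre product `B ×_X Y` of two linear maps with the same target. -/
abbrev fiberProduct (g : B →ₗ[R] X) (p : Y →ₗ[R] X) : ModuleCat.{u} R :=
  .of R (LinearMap.eqLocus (g ∘ₗ LinearMap.fst R B Y) (p ∘ₗ LinearMap.snd R B Y))

namespace IsShortExact_s13

theorem fiberProduct_fst {j : K →ₗ[R] Y} {p : Y →ₗ[R] X} (h : IsShortExact_s13 j p)
    (g : B →ₗ[R] X) :
    ∃ ι : K →ₗ[R] fiberProduct g p,
      IsShortExact_s13 ι (LinearMap.fst R B Y ∘ₗ Submodule.subtype _) := by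
  refine ⟨(LinearMap.inr R B Y ∘ₗ j).codRestrict _ fun k ↦ ?_, fun k l hkl ↦ ?_, ?_, fun b ↦ ?_⟩
  · simp [h.exact.apply_apply_eq_zero]
  · exact h.injective (congrArg (fun q ↦ q.1.2) hkl)
  · rintro ⟨⟨b, y⟩, hby : g b = p y⟩
    constructor
    · rintro (rfl : b = 0)
      obtain ⟨k, rfl⟩ := (h.exact y).1 (by rw [← hby, map_zero])
      exact ⟨k, rfl⟩
    · rintro ⟨k, hk⟩
      exact (congrArg (fun q ↦ q.1.1) hk).symm
  · obtain ⟨y, hy⟩ := h.surjective (g b)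
    exact ⟨⟨(b, y), hy.symm⟩, rfl⟩

theorem fiberProduct_snd (h : IsShortExact_s13 f g) (p : Y →ₗ[R] X) :
    ∃ ι : A →ₗ[R] fiberProduct g p,
      IsShortExact_s13 ι (LinearMap.snd R B Y ∘ₗ Submodule.subtype _) := by
  refine ⟨(LinearMap.inl R B Y ∘ₗ f).codRestrict _ fun k ↦ ?_, fun k l hkl ↦ ?_, ?_, fun y ↦ ?_⟩
  · simp [h.exact.apply_apply_eq_zero]
  · exact h.injective (congrArg (fun q ↦ q.1.1) hkl)
  · rintro ⟨⟨b, y⟩, hby : g b = p y⟩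
    constructor
    · rintro (rfl : y = 0)
      obtain ⟨a, rfl⟩ := (h.exact b).1 (by rw [hby, map_zero])
      exact ⟨a, rfl⟩
    · rintro ⟨a, ha⟩
      exact (congrArg (fun q ↦ q.1.2) ha).symm
  · obtain ⟨b, hb⟩ := h.surjective (p y)
    exact ⟨⟨(b, y), hb⟩, rfl⟩

theorem exists_fiberProduct {j : K →ₗ[R] Y} {p : Y →ₗ[R] X} (h : IsShortExact_s13 f g)
    (h' : IsShortExact_s13 j p) :
    ∃ (Q : ModuleCat.{u} R) (i : A →ₗ[R] Q) (q : Q →ₗ[R] Y) (i' : K →ₗ[R] Q) (q' : Q →ₗ[R] B),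
      IsShortExact_s13 i q ∧ IsShortExact_s13 i' q' :=
  have ⟨i, hi⟩ := h.fiberProduct_snd p
  have ⟨i', hi'⟩ := h'.fiberProduct_fst g
  ⟨fiberProduct g p, i, _, i', _, hi, hi'⟩

theorem exists_ker_comp {j : K →ₗ[R] Y} {p : Y →ₗ[R] B} (h : IsShortExact_s13 f g)
    (h' : IsShortExact_s13 j p) :
    ∃ (W : ModuleCat.{u} R) (i : K →ₗ[R] W) (q : W →ₗ[R] A) (i' : W →ₗ[R] Y) (q' : Y →ₗ[R] X),
      IsShortExact_s13 i q ∧ IsShortExact_s13 i' q' := by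
  obtain ⟨i, hi⟩ := h'.fiberProduct_fst f
  refine ⟨fiberProduct f p, i, _, LinearMap.snd R A Y ∘ₗ Submodule.subtype _, g ∘ₗ p, hi,
    ?_, fun y ↦ ?_, h.surjective.comp h'.surjective⟩
  · rintro ⟨⟨a, y⟩, ha : f a = p y⟩ ⟨⟨a', y'⟩, ha' : f a' = p y'⟩ (rfl : y = y')
    obtain rfl := h.injective (ha.trans ha'.symm)
    rfl
  · refine (h.exact (p y)).trans ⟨?_, ?_⟩
    · rintro ⟨a, ha⟩
      exact ⟨⟨(a, y), ha⟩, rfl⟩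
    · rintro ⟨⟨⟨a, y⟩, ha⟩, rfl⟩
      exact ⟨a, ha⟩

theorem nonempty_equiv_prod [Module.Projective R X] (h : IsShortExact_s13 f g) :
    Nonempty (B ≃ₗ[R] A × X) :=
  have ⟨s, hs⟩ := Module.projective_lifting_property g LinearMap.id h.surjective
  ⟨(h.exact.splitSurjectiveEquiv h.injective ⟨s, hs⟩).1⟩

theorem prodMap_id (h : IsShortExact_s13 f g) (P : ModuleCat.{u} R) :
    IsShortExact_s13 (B := .of R (B × P)) (X := .of R (X × P))
      (LinearMap.inl R B P ∘ₗ f) (g.prodMap LinearMap.id) := by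
  refine ⟨LinearMap.inl_injective.comp h.injective, fun ⟨b, p⟩ ↦ ?_,
    h.surjective.prodMap Function.surjective_id⟩
  simp [Prod.ext_iff, and_comm, eq_comm (a := p), (h.exact b : g b = 0 ↔ _)]

end IsShortExact_s13

theorem exists_isShortExact_free (M : ModuleCat.{u} R) [Module.Finite R M] :
    ∃ (n : ℕ) (K : ModuleCat.{u} R) (i : K →ₗ[R] ModuleCat.of R (Fin n → R))
      (p : ModuleCat.of R (Fin n → R) →ₗ[R] M), IsShortExact_s13 i p :=
  have ⟨n, p, hp⟩ := Module.Finite.exists_fin' R M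
  ⟨n, _, _, p, .of_surjective hp⟩

end FiberProduct

section GCDimension

variable {R} {C A B X : ModuleCat.{u} R} {f : A →ₗ[R] B} {g : B →ₗ[R] X} {n : ℕ}

namespace gcdimLE

theorem of_isShortExact (h : IsShortExact_s13 f g) (hB : IsTotallyCReflexive R C B)
    (hA : gcdimLE R C n A) : gcdimLE R C (n + 1) X :=
  ⟨B, A, f, g, h.injective, h.surjective, h.exact.linearMap_ker_eq, hB, hA⟩

theorem exists_isShortExact (h : gcdimLE R C (n + 1) X) :
    ∃ (B A : ModuleCat.{u} R) (f : A →ₗ[R] B) (g : B →ₗ[R] X),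
      IsShortExact_s13 f g ∧ IsTotallyCReflexive R C B ∧ gcdimLE R C n A :=
  have ⟨B, A, f, g, hf, hg, hfg, hB, hA⟩ := h
  ⟨B, A, f, g, ⟨hf, LinearMap.exact_iff.2 hfg, hg⟩, hB, hA⟩

theorem of_linearEquiv (e : A ≃ₗ[R] B) (h : gcdimLE R C n A) : gcdimLE R C n B := by
  cases n with
  | zero => exact IsTotallyCReflexive.of_linearEquiv e.symm h
  | succ n =>
    obtain ⟨X, K, f, g, hfg, hX, hK⟩ := h.exists_isShortExact
    exact .of_isShortExact (hfg.comp_equiv_right e) hX hK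

theorem finite (h : gcdimLE R C n X) : Module.Finite R X := by
  cases n with
  | zero => exact IsTotallyCReflexive.finite h
  | succ n =>
    obtain ⟨B, A, f, g, hfg, hB, -⟩ := h.exists_isShortExact
    have := hB.finite
    exact .of_surjective g hfg.surjective

theorem subsingleton_ext (h : gcdimLE R C n X) {i : ℕ} (hi : n < i) :
    Subsingleton (ExtM R X C i) := by
  induction n generalizing X i with
  | zero => exact IsTotallyCReflexive.subsingleton_ext h hi
  | succ n ih =>
    obtain ⟨B, A, f, g, hfg, hB, hA⟩ := h.exists_isShortExact
    obtain ⟨i, rfl⟩ := Nat.exists_eq_add_one.2 (Nat.zero_lt_of_lt hi)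
    exact hfg.subsingleton_ext_right (ih hA (by lia)) (hB.subsingleton_ext i.succ_pos)

theorem middle [IsNoetherianRing R] (hC : IsSemidualizing R C) (h : IsShortExact_s13 f g)
    (hA : gcdimLE R C n A) (hX : IsTotallyCReflexive R C X) : gcdimLE R C n B := by
  induction n generalizing A B X with
  | zero => exact IsTotallyCReflexive.middle h hA hX
  | succ n ih =>
    obtain ⟨G, K, j, p, hp, hG, hK⟩ := hA.exists_isShortExact
    have := hX.finite
    obtain ⟨m, Ω, i, q, hq⟩ := exists_isShortExact_free X
    have hΩ : IsTotallyCReflexive R C Ω := .left hq (hC.isTotallyCReflexive_pi m) hX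
    obtain ⟨Q, _, _, _, _, hQ, hQ'⟩ := h.exists_fiberProduct hq
    obtain ⟨e⟩ := hQ.nonempty_equiv_prod
    have hB := hQ'.comp_equiv_middle (B' := .of R (A × (Fin m → R))) e
    obtain ⟨W, _, _, _, _, hW, hW'⟩ := hB.exists_ker_comp (hp.prodMap_id (.of R (Fin m → R)))
    exact .of_isShortExact hW' (.middle (.inl_snd G _) hG (hC.isTotallyCReflexive_pi m))
      (ih hW hK hΩ)

theorem left [IsNoetherianRing R] (h : IsShortExact_s13 f g) (hB : gcdimLE R C n B)
    (hX : IsTotallyCReflexive R C X) : gcdimLE R C n A := by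
  cases n with
  | zero => exact IsTotallyCReflexive.left h hB hX
  | succ n =>
    obtain ⟨G, K, j, p, hp, hG, hK⟩ := hB.exists_isShortExact
    obtain ⟨W, _, _, _, _, hW, hW'⟩ := h.exists_ker_comp hp
    exact .of_isShortExact hW (.left hW' hG hX) hK

theorem left_iff_middle [IsNoetherianRing R] (hC : IsSemidualizing R C) (h : IsShortExact_s13 f g)
    (hX : IsTotallyCReflexive R C X) : gcdimLE R C n A ↔ gcdimLE R C n B :=
  ⟨fun hA ↦ hA.middle hC h hX, fun hB ↦ hB.left h hX⟩

theorem left_iff_right_succ [IsNoetherianRing R] (hC : IsSemidualizing R C)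
    (h : IsShortExact_s13 f g) (hB : IsTotallyCReflexive R C B) :
    gcdimLE R C n A ↔ gcdimLE R C (n + 1) X := by
  refine ⟨.of_isShortExact h hB, fun hX ↦ ?_⟩
  obtain ⟨G, K, j, p, hp, hG, hK⟩ := hX.exists_isShortExact
  obtain ⟨Q, _, _, _, _, hQ, hQ'⟩ := h.exists_fiberProduct hp
  exact (hK.middle hC hQ' hB).left hQ hG

end gcdimLE

end GCDimension

section Presentation

variable {R} {C M T : ModuleCat.{u} R}

theorem exists_exact_fin [IsNoetherianRing R] {G : ModuleCat.{u} R} [Module.Finite R G]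
    (π : G →ₗ[R] M) : ∃ (m : ℕ) (f : (Fin m → R) →ₗ[R] G), Function.Exact f π := by
  obtain ⟨m, p, hp⟩ := Module.Finite.exists_fin' R (LinearMap.ker π)
  exact ⟨m, (LinearMap.ker π).subtype ∘ₗ p,
    (Function.Surjective.comp_exact_iff_exact hp).2 π.exact_subtype_ker_map⟩

theorem exists_injective_comp_eq {L P E Q : ModuleCat.{u} R} {u : L →ₗ[R] P} {p : P →ₗ[R] E}
    {v : P →ₗ[R] Q} (hp : Function.Exact u p) (hp' : Function.Surjective p)
    (hv : Function.Exact u v) : ∃ ε : E →ₗ[R] Q, Function.Injective ε ∧ ε ∘ₗ p = v := by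
  obtain ⟨ε, hε⟩ := (LinearMap.exact_lcomp_of_exact_of_surjective Q hp hp' v).1
    hv.linearMap_comp_eq_zero
  refine ⟨ε, (injective_iff_map_eq_zero ε).2 fun x hx ↦ ?_, hε⟩
  obtain ⟨y, rfl⟩ := hp' x
  exact (hp y).2 ((hv y).1 ((LinearMap.congr_fun hε y).symm.trans hx))

theorem exists_isShortExact_coker {L P Q E Y T : ModuleCat.{u} R} {u : L →ₗ[R] P}
    {a : P →ₗ[R] Q} {δ : P →ₗ[R] E} {ρ : Q →ₗ[R] Y} {τ : Q →ₗ[R] T} (hδ : Function.Exact u δ)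
    (hδ' : Function.Surjective δ) (ha : IsShortExact_s13 a ρ) (hτ : Function.Exact (a ∘ₗ u) τ)
    (hτ' : Function.Surjective τ) :
    ∃ (ε : E →ₗ[R] T) (σ : T →ₗ[R] Y), IsShortExact_s13 ε σ := by
  have hτa : Function.Exact u (τ ∘ₗ a) := fun x ↦
    (hτ (a x)).trans ⟨fun ⟨y, hy⟩ ↦ ⟨y, ha.injective hy⟩, fun ⟨y, hy⟩ ↦ ⟨y, congrArg a hy⟩⟩
  obtain ⟨ε, hε, hεδ⟩ := exists_injective_comp_eq hδ hδ' hτa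
  obtain ⟨σ, rfl⟩ := (LinearMap.exact_lcomp_of_exact_of_surjective Y hτ hτ' ρ).1
    (LinearMap.ext fun x ↦ ha.exact.apply_apply_eq_zero (u x))
  refine ⟨ε, σ, hε, fun t ↦ ?_, .of_comp (g := τ) ha.surjective⟩
  obtain ⟨q, rfl⟩ := hτ' t
  refine (ha.exact q).trans ⟨?_, ?_⟩
  · rintro ⟨x, rfl⟩
    exact ⟨δ x, LinearMap.congr_fun hεδ x⟩
  · rintro ⟨e, he⟩
    obtain ⟨x, rfl⟩ := hδ' e
    obtain ⟨y, hy⟩ := (hτ (q - a x)).1 (by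
      rw [map_sub, ← he, sub_eq_zero]
      exact LinearMap.congr_fun hεδ x)
    exact ⟨u y + x, by rw [map_add, ← sub_add_cancel q (a x), ← hy, LinearMap.comp_apply]⟩

variable (C M T) in
/-- A presentation `G₁ → G₀ → M → 0` by totally `C`-reflexive modules, together with a cokernel
`T` of its dual `G₀^C → G₁^C`. Unlike presentations by projectives, these data are symmetric in
`M` and `T`. -/
structure GCPresentation where
  /-- The module of relations. -/
  {G₁ : ModuleCat.{u} R}
  /-- The module of generators. -/
  {G₀ : ModuleCat.{u} R}
  /-- The presenting map. -/
  f : G₁ →ₗ[R] G₀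
  /-- The projection onto the presented module. -/
  π : G₀ →ₗ[R] M
  /-- The projection onto the transpose. -/
  τ : cDual C G₁ →ₗ[R] T
  reflexive₁ : IsTotallyCReflexive R C G₁
  reflexive₀ : IsTotallyCReflexive R C G₀
  exact_π : Function.Exact f π
  surjective_π : Function.Surjective π
  exact_τ : Function.Exact (cDualMap C f) τ
  surjective_τ : Function.Surjective τ

namespace GCPresentation

theorem nonempty_of_isTransposeC (hC : IsSemidualizing R C) (h : IsTransposeC R C M T) :
    Nonempty (GCPresentation C M T) := by
  obtain ⟨P₁, P₀, d, π, ⟨_, _, ⟨_, hπ, _⟩, hdπ, _, _⟩, ⟨e⟩⟩ := h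
  exact ⟨{
    f := d
    π := π
    τ := e.symm.toLinearMap ∘ₗ Submodule.mkQ _
    reflexive₁ := hC.isTotallyCReflexive_of_projective
    reflexive₀ := hC.isTotallyCReflexive_of_projective
    exact_π := LinearMap.exact_iff.2 hdπ.symm
    surjective_π := hπ
    exact_τ := (LinearMap.exact_map_mkQ_range (cDualMap C d)).comp_injective _ e.symm.injective
      (map_zero e.symm)
    surjective_τ := e.symm.surjective.comp (Submodule.mkQ_surjective _) }⟩

/-- The presentation with a given presenting map, the transpose being the standard cokernel. -/
def ofExact {G₁ G₀ : ModuleCat.{u} R} {f : G₁ →ₗ[R] G₀} {π : G₀ →ₗ[R] M}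
    (h₁ : IsTotallyCReflexive R C G₁) (h₀ : IsTotallyCReflexive R C G₀)
    (hf : Function.Exact f π) (hπ : Function.Surjective π) :
    GCPresentation C M (.of R (cDual C G₁ ⧸ LinearMap.range (cDualMap C f))) where
  f := f
  π := π
  τ := Submodule.mkQ _
  reflexive₁ := h₁
  reflexive₀ := h₀
  exact_π := hf
  surjective_π := hπ
  exact_τ := LinearMap.exact_map_mkQ_range (cDualMap C f)
  surjective_τ := Submodule.mkQ_surjective _

theorem exists_of_finite [IsNoetherianRing R] (hC : IsSemidualizing R C) [Module.Finite R M] :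
    ∃ T : ModuleCat.{u} R, Nonempty (GCPresentation C M T) := by
  obtain ⟨n, π, hπ⟩ := Module.Finite.exists_fin' R M
  obtain ⟨m, f, hf⟩ := exists_exact_fin (G := .of R (Fin n → R)) π
  exact ⟨_, ⟨ofExact (G₁ := .of R (Fin m → R)) (G₀ := .of R (Fin n → R))
    (hC.isTotallyCReflexive_pi m) (hC.isTotallyCReflexive_pi n) hf hπ⟩⟩

/-- The presentation of `T` with transpose `M` obtained by dualizing. -/
def symm [IsNoetherianRing R] [Module.Finite R C] (P : GCPresentation C M T) :
    GCPresentation C T M where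
  f := cDualMap C P.f
  π := P.τ
  τ := P.π ∘ₗ P.reflexive₀.bidualityEquiv.symm.toLinearMap
  reflexive₁ := P.reflexive₀.dual
  reflexive₀ := P.reflexive₁.dual
  exact_π := P.exact_τ
  surjective_π := P.surjective_τ
  exact_τ := by
    refine .of_ladder_linearEquiv_of_exact (e₁ := P.reflexive₁.bidualityEquiv)
      (e₂ := P.reflexive₀.bidualityEquiv) (e₃ := .refl R M) rfl ?_ P.exact_π
    ext x
    simp
  surjective_τ := P.surjective_π.comp (LinearEquiv.surjective _)

variable (P : GCPresentation C M T)

/-- The syzygy of `M` in a presentation, i.e. the image of `G₁` in `G₀`. -/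
abbrev syzygy : ModuleCat.{u} R := .of R (LinearMap.ker P.π)

/-- The surjection of `G₁` onto the syzygy. -/
abbrev cover : P.G₁ →ₗ[R] P.syzygy := P.f.codRestrict _ P.exact_π.apply_apply_eq_zero

theorem surjective_cover : Function.Surjective P.cover := fun ⟨y, hy⟩ ↦
  have ⟨x, hx⟩ := (P.exact_π y).1 hy
  ⟨x, Subtype.ext hx⟩

theorem isShortExact_syzygy : IsShortExact_s13 (A := P.syzygy) (LinearMap.ker P.π).subtype P.π :=
  .of_surjective P.surjective_π

theorem gcdimLE_syzygy [IsNoetherianRing R] (hC : IsSemidualizing R C) {n : ℕ}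
    (hM : gcdimLE R C (n + 1) M) : gcdimLE R C n P.syzygy :=
  (gcdimLE.left_iff_right_succ hC P.isShortExact_syzygy P.reflexive₀).2 hM

theorem bidualityMap_τ_eq_zero_iff (φ : cDual C P.G₁) :
    bidualityMap R C T (P.τ φ) = 0 ↔ LinearMap.ker P.f ≤ LinearMap.ker φ := by
  constructor
  · intro h x (hx : P.f x = 0)
    obtain ⟨η, hη⟩ := (LinearMap.exact_lcomp_of_exact_of_surjective C P.exact_τ P.surjective_τ
      (bidualityMap R C P.G₁ x)).1 (LinearMap.ext fun ψ ↦ (congrArg ψ hx).trans (map_zero ψ))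
    exact (LinearMap.congr_fun hη φ).symm.trans (LinearMap.congr_fun h η)
  · refine fun h ↦ LinearMap.ext fun η ↦ ?_
    obtain ⟨x, hx⟩ := P.reflexive₁.bijective.surjective (η ∘ₗ P.τ)
    have hfx : P.f x = 0 := by
      refine P.reflexive₀.bijective.injective (LinearMap.ext fun ψ ↦ ?_)
      rw [← cDualMap_cDualMap_bidualityMap, hx, map_zero]
      exact (congrArg η (P.exact_τ.apply_apply_eq_zero ψ)).trans (map_zero η)
    exact (LinearMap.congr_fun hx φ).symm.trans (h hfx)

include P

theorem subsingleton_ext_one_iff :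
    Subsingleton (ExtM R M C 1) ↔ Function.Injective (bidualityMap R C T) := by
  have hker (φ : cDual C P.syzygy) :
      LinearMap.ker P.f ≤ LinearMap.ker (cDualMap C P.cover φ) := fun x hx ↦
    (congrArg φ (Subtype.ext hx : P.cover x = 0)).trans (map_zero φ)
  refine ⟨fun hM ↦ (injective_iff_map_eq_zero _).2 fun t ht ↦ ?_, fun hT ↦
    P.isShortExact_syzygy.subsingleton_ext_one_of_cDualMap_surjective
      (P.reflexive₀.subsingleton_ext one_pos) fun φ ↦ ?_⟩
  · obtain ⟨φ, rfl⟩ := P.surjective_τ t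
    have hφ := (P.bidualityMap_τ_eq_zero_iff φ).1 ht
    obtain ⟨φ, rfl⟩ := (LinearMap.exact_lcomp_of_exact_of_surjective C
      P.cover.exact_subtype_ker_map P.surjective_cover φ).1
      (LinearMap.ext fun x ↦ hφ (congrArg Subtype.val x.2))
    obtain ⟨ψ, rfl⟩ := P.isShortExact_syzygy.cDualMap_surjective hM φ
    exact P.exact_τ.apply_apply_eq_zero ψ
  · obtain ⟨ψ, hψ⟩ := (P.exact_τ (cDualMap C P.cover φ)).1
      (hT (((P.bidualityMap_τ_eq_zero_iff _).2 (hker φ)).trans (map_zero _).symm))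
    exact ⟨ψ, LinearMap.lcomp_injective_of_surjective P.cover P.surjective_cover hψ⟩

theorem isShortExact_dual (hM : Subsingleton (cDual C M)) : IsShortExact_s13 (cDualMap C P.f) P.τ := by
  refine ⟨(injective_iff_map_eq_zero _).2 fun ψ hψ ↦ ?_, P.exact_τ, P.surjective_τ⟩
  obtain ⟨φ, rfl⟩ :=
    (LinearMap.exact_lcomp_of_exact_of_surjective C P.exact_π P.surjective_π ψ).1 hψ
  rw [hM.elim φ 0, map_zero]

theorem exists_isShortExact_of_gcdimLE_one [IsNoetherianRing R] (hC : IsSemidualizing R C)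
    (hM : gcdimLE R C 1 M) : ∃ (Y : ModuleCat.{u} R) (ε : ExtM R M C 1 →ₗ[R] T) (σ : T →ₗ[R] Y),
      IsShortExact_s13 ε σ ∧ IsTotallyCReflexive R C Y := by
  have hI : IsTotallyCReflexive R C P.syzygy := P.gcdimLE_syzygy hC hM
  obtain ⟨δ, hδ, hδ'⟩ := P.isShortExact_syzygy.exists_connecting C
  have hK := IsShortExact_s13.of_surjective P.surjective_cover
  have := hC.finite
  obtain ⟨ε, σ, hεσ⟩ := exists_isShortExact_coker hδ (hδ' (P.reflexive₀.subsingleton_ext one_pos))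
    (hK.dual (hI.subsingleton_ext one_pos)) P.exact_τ P.surjective_τ
  exact ⟨_, ε, σ, hεσ, (IsTotallyCReflexive.left hK P.reflexive₁ hI).dual⟩

theorem subsingleton_cDual_ext_one [IsNoetherianRing R] (hC : IsSemidualizing R C)
    (hM : gcdimLE R C 1 M) : Subsingleton (cDual C (ExtM R M C 1)) := by
  have hI : IsTotallyCReflexive R C P.syzygy := P.gcdimLE_syzygy hC hM
  obtain ⟨δ, hδ, hδ'⟩ := P.isShortExact_syzygy.exists_connecting C
  have hδs := hδ' (P.reflexive₀.subsingleton_ext one_pos)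
  refine subsingleton_of_forall_eq 0 fun ξ ↦ ?_
  obtain ⟨x, hx⟩ := hI.bijective.surjective (ξ ∘ₗ δ)
  have hx₀ : (x : P.G₀) = 0 := by
    refine P.reflexive₀.bijective.injective (LinearMap.ext fun ψ ↦ ?_)
    rw [map_zero]
    refine (LinearMap.congr_fun hx (cDualMap C (LinearMap.ker P.π).subtype ψ)).trans ?_
    exact (congrArg ξ (hδ.apply_apply_eq_zero ψ)).trans (map_zero ξ)
  obtain rfl : x = 0 := Subtype.ext hx₀
  refine LinearMap.cancel_right hδs |>.1 ?_
  rw [← hx, map_zero, LinearMap.zero_comp]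

theorem exists_syzygy_presentation [IsNoetherianRing R] (hC : IsSemidualizing R C)
    (hM : Subsingleton (ExtM R M C 1)) :
    ∃ (T' H : ModuleCat.{u} R) (θ : T →ₗ[R] H) (σ : H →ₗ[R] T'),
      Nonempty (GCPresentation C P.syzygy T') ∧ IsShortExact_s13 θ σ ∧ IsTotallyCReflexive R C H ∧
        Subsingleton (ExtM R T' C 1) := by
  have := hC.finite
  have := P.reflexive₁.finite
  obtain ⟨m, g, hg⟩ := exists_exact_fin P.cover
  let P' := ofExact (G₁ := .of R (Fin m → R)) (hC.isTotallyCReflexive_pi m) P.reflexive₁ hg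
    P.surjective_cover
  have hexact : Function.Exact (cDualMap C P.f) (cDualMap C P'.f) :=
    (Function.Surjective.comp_exact_iff_exact (P.isShortExact_syzygy.cDualMap_surjective hM)).2
      (LinearMap.exact_lcomp_of_exact_of_surjective C hg P.surjective_cover)
  obtain ⟨θ, hθ, hθτ⟩ := exists_injective_comp_eq P.exact_τ P.surjective_τ hexact
  refine ⟨_, _, θ, P'.τ, ⟨P'⟩, ⟨hθ, ?_, P'.surjective_τ⟩, P'.reflexive₁.dual,
    (P'.symm.subsingleton_ext_one_iff).2 ?_⟩
  · rw [← Function.Surjective.comp_exact_iff_exact P.surjective_τ, hθτ]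
    exact P'.exact_τ
  · refine .of_comp (f := cDualMap C (cDualMap C (LinearMap.ker P.π).subtype)) ?_
    exact P.reflexive₀.bijective.injective.comp P.isShortExact_syzygy.injective

end GCPresentation

end Presentation

section TransposeChain

variable {R} {C E T M : ModuleCat.{u} R} {n : ℕ}

variable (C) in
/-- `TransposeChain C n E T` records exact sequences `0 → T → H₁ → ⋯ → Hₙ → T' → 0` and
`0 → E → T' → Y → 0` with totally `C`-reflexive `Hᵢ` and `Y`, where `Hom(E, C) = 0` and
`Ext¹(-, C)` vanishes on the cokernels of the first sequence. This is how the transpose `T` of a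
module `M` with `Ext^i(M, C) = 0` for `0 < i ≤ n` and `G_C`-dimension at most `n + 1` is related
to `E = Ext^{n+1}(M, C)`. -/
inductive TransposeChain : ℕ → ModuleCat.{u} R → ModuleCat.{u} R → Prop
  | zero {E T Y : ModuleCat.{u} R} {ε : E →ₗ[R] T} {σ : T →ₗ[R] Y} (h : IsShortExact_s13 ε σ)
      (hY : IsTotallyCReflexive R C Y) (hE : Subsingleton (cDual C E)) : TransposeChain 0 E T
  | succ {n : ℕ} {E T H T' : ModuleCat.{u} R} {θ : T →ₗ[R] H} {σ : H →ₗ[R] T'}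
      (h : IsShortExact_s13 θ σ) (hH : IsTotallyCReflexive R C H)
      (hT' : Subsingleton (ExtM R T' C 1)) (hE : TransposeChain n E T') :
      TransposeChain (n + 1) E T

namespace TransposeChain

theorem nonempty_ext_equiv (h : TransposeChain C n E T) {i : ℕ} (hi : 0 < i) :
    Nonempty (ExtM R T C i ≃ₗ[R] ExtM R E C (i + n)) := by
  induction h generalizing i with
  | zero h hY _ =>
    exact h.nonempty_ext_equiv_left (hY.subsingleton_ext hi) (hY.subsingleton_ext i.succ_pos)
  | succ h hH _ _ ih =>
    obtain ⟨e⟩ :=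
      h.nonempty_ext_equiv_succ (hH.subsingleton_ext hi) (hH.subsingleton_ext i.succ_pos)
    obtain ⟨e'⟩ := ih i.succ_pos
    rw [Nat.succ_add_eq_add_succ] at e'
    exact ⟨e.trans e'⟩

theorem gcdimLE_iff [IsNoetherianRing R] (hC : IsSemidualizing R C) (h : TransposeChain C n E T)
    (m : ℕ) : gcdimLE R C m T ↔ gcdimLE R C (m + n) E := by
  induction h generalizing m with
  | zero h hY _ => exact (gcdimLE.left_iff_middle hC h hY).symm
  | succ h hH _ _ ih =>
    rw [gcdimLE.left_iff_right_succ hC h hH, ih, Nat.succ_add_eq_add_succ]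

theorem subsingleton_ext (h : TransposeChain C n E T) {i : ℕ} (hi : i ≤ n) :
    Subsingleton (ExtM R E C i) := by
  induction h with
  | zero _ _ hE =>
    obtain rfl := Nat.le_zero.1 hi
    exact (ExtM.linearEquivHom _ C).toEquiv.subsingleton
  | @succ n _ _ _ _ _ _ _ _ hT' hE ih =>
    obtain hi | rfl := Nat.le_succ_iff.1 hi
    · exact ih hi
    · obtain ⟨e⟩ := hE.nonempty_ext_equiv one_pos
      rw [add_comm] at e
      exact e.symm.toEquiv.subsingleton

end TransposeChain

theorem GCPresentation.transposeChain [IsNoetherianRing R] (hC : IsSemidualizing R C)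
    (P : GCPresentation C M T) (hM : gcdimLE R C (n + 1) M)
    (hv : ∀ i, 0 < i → i ≤ n → Subsingleton (ExtM R M C i)) (e : E ≃ₗ[R] ExtM R M C (n + 1)) :
    TransposeChain C n E T := by
  induction n generalizing M T with
  | zero =>
    obtain ⟨Y, ε, σ, h, hY⟩ := P.exists_isShortExact_of_gcdimLE_one hC hM
    have := P.subsingleton_cDual_ext_one hC hM
    exact .zero (h.comp_equiv_left e) hY (e.congrLeft C R).toEquiv.subsingleton
  | succ n ih =>
    obtain ⟨T', H, θ, σ, ⟨P'⟩, h, hH, hT'⟩ :=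
      P.exists_syzygy_presentation hC (hv 1 one_pos n.succ_pos)
    obtain ⟨e'⟩ := P.isShortExact_syzygy.nonempty_ext_equiv_succ
      (P.reflexive₀.subsingleton_ext n.succ_pos) (P.reflexive₀.subsingleton_ext (n + 1).succ_pos)
    exact .succ h hH hT' (ih P' (P.gcdimLE_syzygy hC hM)
      (fun i hi hin ↦ P.isShortExact_syzygy.subsingleton_ext_left
        (P.reflexive₀.subsingleton_ext hi) (hv (i + 1) i.succ_pos (Nat.succ_le_succ hin)))
      (e.trans e'.symm))

end TransposeChain

section Grade

variable {R} {C E S : ModuleCat.{u} R} {j : ℕ}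

namespace ExtM

variable (E) (j) in
/-- Functoriality of `Ext` in the second variable, as a map that is linear in the morphism. -/
def postcomp (N N' : ModuleCat.{u} R) :
    (N →ₗ[R] N') →ₗ[R] Abelian.Ext E N j →ₗ[R] Abelian.Ext E N' j :=
  (Abelian.Ext.bilinearCompOfLinear R E N N' j 0 j (add_zero j)).flip ∘ₗ
    (ModuleCat.homLinearEquiv.symm ≪≫ₗ Abelian.Ext.linearEquiv₀.symm).toLinearMap

variable {N N' N'' : ModuleCat.{u} R}

theorem postcomp_id (x : Abelian.Ext E N j) : postcomp E j N N LinearMap.id x = x :=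
  Abelian.Ext.comp_mk₀_id x

theorem postcomp_postcomp (f : N →ₗ[R] N') (g : N' →ₗ[R] N'') (x : Abelian.Ext E N j) :
    postcomp E j N' N'' g (postcomp E j N N' f x) = postcomp E j N N'' (g ∘ₗ f) x :=
  (Abelian.Ext.comp_assoc_of_third_deg_zero _ _ _ _).trans
    (congrArg (x.comp · (add_zero j)) (Abelian.Ext.mk₀_comp_mk₀ _ _))

end ExtM

namespace IsShortExact_s13

variable {A B X : ModuleCat.{u} R} {f : A →ₗ[R] B} {g : B →ₗ[R] X} (h : IsShortExact_s13 f g)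
include h

theorem exact_postcomp : Function.Exact (ExtM.postcomp E j A B f) (ExtM.postcomp E j B X g) := by
  refine fun x ↦ ⟨Abelian.Ext.covariant_sequence_exact₂ E h.shortExact_s13 x, ?_⟩
  rintro ⟨y, rfl⟩
  rw [ExtM.postcomp_postcomp, h.exact.linearMap_comp_eq_zero, map_zero, LinearMap.zero_apply]

theorem injective_postcomp (hX : ∀ i < j, Subsingleton (Abelian.Ext E X i)) :
    Function.Injective (ExtM.postcomp E j A B f) := by
  obtain _ | j := j
  · have := h.shortExact_s13.mono_f
    exact Abelian.Ext.postcomp_mk₀_injective_of_mono E (ModuleCat.ofHom f)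
  · refine (injective_iff_map_eq_zero _).2 fun x hx ↦ ?_
    obtain ⟨y, rfl⟩ := Abelian.Ext.covariant_sequence_exact₁ E h.shortExact_s13 x hx rfl
    rw [(hX j j.lt_succ_self).elim y 0, Abelian.Ext.zero_comp]

end IsShortExact_s13

variable (C E S j) in
/-- The natural map `Ext^j(E, Hom(S, C)) → Hom(S, Ext^j(E, C))` induced by the evaluations
`Hom(S, C) → C`. -/
def extHomComparison : Abelian.Ext E (cDual C S) j →ₗ[R] (S →ₗ[R] Abelian.Ext E C j) :=
  (ExtM.postcomp E j (cDual C S) C ∘ₗ bidualityMap R C S).flip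

theorem extHomComparison_postcomp {S' : ModuleCat.{u} R} (f : S' →ₗ[R] S)
    (x : Abelian.Ext E (cDual C S) j) :
    extHomComparison C E S' j (ExtM.postcomp E j _ _ (cDualMap C f) x) =
      extHomComparison C E S j x ∘ₗ f :=
  LinearMap.ext fun _ ↦ ExtM.postcomp_postcomp _ _ _

theorem bijective_extHomComparison_pi (C E : ModuleCat.{u} R) (j b : ℕ) :
    Function.Bijective (extHomComparison C E (.of R (Fin b → R)) j) := by
  let F : ModuleCat.{u} R := .of R (Fin b → R)
  let ι (k : Fin b) : C →ₗ[R] cDual C F := LinearMap.smulRightₗ (LinearMap.proj k)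
  let inv (φ : F →ₗ[R] Abelian.Ext E C j) : Abelian.Ext E (cDual C F) j :=
    ∑ k, ExtM.postcomp E j _ _ (ι k) (φ (Pi.single k 1))
  refine Function.bijective_iff_has_inverse.2 ⟨inv, fun x ↦ ?_, fun φ ↦ ?_⟩
  · have hid : ∑ k, ι k ∘ₗ bidualityMap R C F (Pi.single k 1) = LinearMap.id := by
      refine LinearMap.ext fun ψ ↦ LinearMap.ext fun (x : Fin b → R) ↦ ?_
      change (∑ k, ι k ∘ₗ bidualityMap R C F (Pi.single k 1)) ψ x = ψ x
      rw [LinearMap.pi_apply_eq_sum_univ ψ x, LinearMap.sum_apply, LinearMap.sum_apply]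
      refine Finset.sum_congr rfl fun k _ ↦ congrArg (x k • ψ ·) (funext fun l ↦ ?_)
      simp only [Pi.single_apply, eq_comm]
    refine Eq.trans ?_ (ExtM.postcomp_id x)
    rw [← hid, map_sum, LinearMap.sum_apply]
    exact Finset.sum_congr rfl fun k _ ↦ ExtM.postcomp_postcomp _ _ _
  · refine LinearMap.pi_ext' fun k ↦ LinearMap.ext_ring ?_
    have hδ (l : Fin b) (y : Abelian.Ext E C j) :
        ExtM.postcomp E j _ _ (bidualityMap R C F (Pi.single k 1)) (ExtM.postcomp E j _ _ (ι l) y) =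
          (Pi.single k 1 : Fin b → R) l • y := by
      have h : bidualityMap R C F (Pi.single k 1) ∘ₗ ι l =
        (Pi.single k 1 : Fin b → R) l • LinearMap.id := rfl
      rw [ExtM.postcomp_postcomp, h, map_smul, LinearMap.smul_apply, ExtM.postcomp_id]
    change ExtM.postcomp E j _ _ (bidualityMap R C F (Pi.single k 1)) (inv φ) =
      φ (Pi.single k 1)
    refine (map_sum _ _ _).trans ((Fintype.sum_eq_single k fun l hl ↦ ?_).trans ?_)
    · rw [hδ, Pi.single_eq_of_ne hl, zero_smul]
    · rw [hδ, Pi.single_eq_same, one_smul]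

theorem injective_extHomComparison [IsNoetherianRing R] [Module.Finite R S]
    (hS : ∀ i, 0 < i → Subsingleton (ExtM R S C i))
    (hE : ∀ i < j, Subsingleton (Abelian.Ext E C i)) :
    Function.Injective (extHomComparison C E S j) := by
  induction j using Nat.strong_induction_on generalizing S with | h j ih =>
  obtain ⟨b, S', i, p, h⟩ := exists_isShortExact_free S
  have hS' (k : ℕ) (hk : 0 < k) : Subsingleton (ExtM R S' C k) :=
    h.subsingleton_ext_left (ExtM.subsingleton_of_projective _ C hk) (hS _ k.succ_pos)
  have : Module.Finite R S' := .of_injective i h.injective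
  have hinj := (h.dual (hS 1 one_pos)).injective_postcomp (E := E) (j := j) fun k hk ↦
    have := hE k hk
    (ih k hk hS' fun l hl ↦ hE l (hl.trans hk)).subsingleton
  refine .of_comp (f := fun φ ↦ φ ∘ₗ p) ?_
  convert (bijective_extHomComparison_pi C E j b).injective.comp hinj using 1
  exact funext fun x ↦ (extHomComparison_postcomp p x).symm

theorem surjective_extHomComparison [IsNoetherianRing R] [Module.Finite R S]
    (hS : ∀ i, 0 < i → Subsingleton (ExtM R S C i))
    (hE : ∀ i < j, Subsingleton (Abelian.Ext E C i)) :
    Function.Surjective (extHomComparison C E S j) := by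
  obtain ⟨b, S', i, p, h⟩ := exists_isShortExact_free S
  have hS' (k : ℕ) (hk : 0 < k) : Subsingleton (ExtM R S' C k) :=
    h.subsingleton_ext_left (ExtM.subsingleton_of_projective _ C hk) (hS _ k.succ_pos)
  have : Module.Finite R S' := .of_injective i h.injective
  intro φ
  obtain ⟨y, hy⟩ := (bijective_extHomComparison_pi C E j b).surjective (φ ∘ₗ p)
  obtain ⟨x, rfl⟩ := ((h.dual (hS 1 one_pos)).exact_postcomp y).1
    (injective_extHomComparison hS' hE (by
      rw [extHomComparison_postcomp, hy, LinearMap.comp_assoc, h.exact.linearMap_comp_eq_zero,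
        LinearMap.comp_zero, map_zero]))
  refine ⟨x, (LinearMap.cancel_right h.surjective).1 ?_⟩
  rw [← extHomComparison_postcomp, hy]

theorem subsingleton_of_linearMap_of_faithful [IsNoetherianRing R] [Module.Finite R C]
    [FaithfulSMul R C] {N : Type*} [AddCommGroup N] [Module R N] [Module.Finite R N]
    (h : Subsingleton (C →ₗ[R] N)) : Subsingleton N := by
  obtain ⟨r, hr, hreg⟩ := IsSMulRegular.subsingleton_linearMap_iff.1 h
  obtain rfl : r = 0 := by
    rwa [Module.annihilator_eq_bot.2 inferInstance] at hr
  exact subsingleton_of_forall_eq 0 fun x ↦ hreg (by simp)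

theorem IsSemidualizing.subsingleton_ext_ring_iff [IsNoetherianRing R] [Module.Finite R E]
    (hC : IsSemidualizing R C) (hE : ∀ i < j, Subsingleton (ExtM R E C i)) :
    Subsingleton (ExtM R E (.of R R) j) ↔ Subsingleton (ExtM R E C j) := by
  have := hC.finite
  have : FaithfulSMul R C := ⟨fun h ↦ hC.homothetyEquiv.injective (LinearMap.ext h)⟩
  have hE' (i : ℕ) (hi : i < j) := ExtM.subsingleton_iff.1 (hE i hi)
  have hbij : Function.Bijective (extHomComparison C E C j) :=
    ⟨injective_extHomComparison (fun _ ↦ hC.subsingleton_ext) hE',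
      surjective_extHomComparison (fun _ ↦ hC.subsingleton_ext) hE'⟩
  rw [(ExtM.congrRight E (Y := cDual C C) hC.homothetyEquiv j).toEquiv.subsingleton_congr,
    ExtM.subsingleton_iff, (Equiv.ofBijective _ hbij).subsingleton_congr, ExtM.subsingleton_iff]
  have : Module.Finite R (Abelian.Ext E C j) := .equiv (ExtM.linearEquivExt E C j)
  exact ⟨subsingleton_of_linearMap_of_faithful, fun _ ↦ inferInstance⟩

theorem isLeast_iff_of_forall_lt_notMem {s t : Set ℕ} {n : ℕ}
    (h : ∀ j, (∀ i < j, i ∉ t) → (j ∈ s ↔ j ∈ t)) : IsLeast s n ↔ IsLeast t n := by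
  have hts {m : ℕ} (hm : IsLeast t m) : IsLeast s m := by
    have hlt (i : ℕ) (hi : i < m) : i ∉ t := fun hit ↦ (hm.2 hit).not_gt hi
    exact ⟨(h m hlt).2 hm.1, fun k hk ↦ not_lt.1 fun hkm ↦
      hlt k hkm ((h k fun i hi ↦ hlt i (hi.trans hkm)).1 hk)⟩
  refine ⟨fun hs ↦ ?_, hts⟩
  have ht : t.Nonempty := by
    by_contra! ht
    exact Set.notMem_empty n (ht ▸ (h n (by simp [ht])).1 hs.1)
  have hm := isLeast_csInf ht
  exact (hts hm).unique hs ▸ hm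

theorem IsSemidualizing.isLeast_ext_ring_iff [IsNoetherianRing R] [Module.Finite R E]
    (hC : IsSemidualizing R C) : IsLeast {i | ¬ Subsingleton (ExtM R E (.of R R) i)} j ↔
      IsLeast {i | ¬ Subsingleton (ExtM R E C i)} j :=
  isLeast_iff_of_forall_lt_notMem fun _ h ↦
    (hC.subsingleton_ext_ring_iff fun i hi ↦ not_not.1 (h i hi)).not

end Grade

section Perfect

variable {R} {C M T E E' : ModuleCat.{u} R} {n t : ℕ}

theorem sInf_natCast_image_eq_iff {s : Set ℕ} :
    sInf ((fun i : ℕ ↦ (i : ℕ∞)) '' s) = n ↔ IsLeast s n := by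
  refine ⟨fun h ↦ ?_, fun h ↦ (Nat.mono_cast.map_isLeast h).isGLB.sInf_eq⟩
  have hs : s.Nonempty := by
    by_contra! hs
    simp [hs] at h
  obtain rfl := Nat.cast_injective (R := ℕ∞)
    (((Nat.mono_cast.map_isLeast (isLeast_csInf hs)).isGLB.sInf_eq).symm.trans h)
  exact isLeast_csInf hs

variable (C M n) in
/-- `M` is reduced `G_C`-perfect of `G_C`-dimension `n`, expressed without `ℕ∞`-valued infima. -/
def IsReducedGCPerfectOfDim : Prop :=
  gcdimLE R C n M ∧ IsLeast {i | 0 < i ∧ ¬ Subsingleton (ExtM R M C i)} n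

variable (C M n) in
/-- `M` is `G_C`-perfect of `G_C`-dimension `n`, expressed without `ℕ∞`-valued infima and with the
grade computed by `Ext^i(M, C)` instead of `Ext^i(M, R)`. -/
def IsGCPerfectOfDim : Prop :=
  gcdimLE R C n M ∧ IsLeast {i | ¬ Subsingleton (ExtM R M C i)} n

theorem sInf_eq_gcdim_and_gcdim_eq_iff {s : Set ℕ}
    (hs : gcdimLE R C n M → IsLeast s n → ¬ Subsingleton (ExtM R M C n)) :
    ((gcdim R C M ≠ ⊤ ∧ sInf ((fun i : ℕ ↦ (i : ℕ∞)) '' s) = gcdim R C M) ∧ gcdim R C M = n) ↔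
      gcdimLE R C n M ∧ IsLeast s n := by
  constructor
  · rintro ⟨⟨_, h⟩, hn⟩
    exact ⟨(sInf_natCast_image_eq_iff.1 hn).1, sInf_natCast_image_eq_iff.1 (h.trans hn)⟩
  · rintro ⟨hM, hsn⟩
    have hn : gcdim R C M = n := sInf_natCast_image_eq_iff.2
      ⟨hM, fun m hm ↦ not_lt.1 fun hmn ↦ hs hM hsn (gcdimLE.subsingleton_ext hm hmn)⟩
    exact ⟨⟨hn ▸ ENat.natCast_ne_top n, (sInf_natCast_image_eq_iff.2 hsn).trans hn.symm⟩, hn⟩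

theorem isReducedGCPerfect_and_gcdim_eq_iff :
    IsReducedGCPerfect R C M ∧ gcdim R C M = n ↔ IsReducedGCPerfectOfDim C M n :=
  sInf_eq_gcdim_and_gcdim_eq_iff fun _ h ↦ h.1.2

variable [IsNoetherianRing R] (hC : IsSemidualizing R C)
include hC

theorem isGCPerfect_and_gcdim_eq_iff :
    IsGCPerfect R C M ∧ gcdim R C M = n ↔ IsGCPerfectOfDim C M n := by
  have hgrade (h : gcdimLE R C n M) :=
    have := h.finite
    hC.isLeast_ext_ring_iff (E := M) (j := n)
  exact (sInf_eq_gcdim_and_gcdim_eq_iff fun h hl ↦ ((hgrade h).1 hl).1).trans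
    (and_congr_right hgrade)

theorem TransposeChain.isReducedGCPerfectOfDim_iff (h : TransposeChain C n E T) :
    IsReducedGCPerfectOfDim C T t ↔ IsGCPerfectOfDim C E (t + n) := by
  refine and_congr (h.gcdimLE_iff hC t) ?_
  have hset : {i | ¬ Subsingleton (ExtM R E C i)} =
      (· + n) '' {i | 0 < i ∧ ¬ Subsingleton (ExtM R T C i)} := by
    ext i
    constructor
    · intro hi
      have hni : n < i := not_le.1 fun hin ↦ hi (h.subsingleton_ext hin)
      obtain ⟨k, rfl⟩ := Nat.exists_eq_add_of_le' hni.le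
      have hk : 0 < k := by lia
      obtain ⟨e⟩ := h.nonempty_ext_equiv hk
      exact ⟨k, ⟨hk, e.toEquiv.subsingleton_congr.not.2 hi⟩, rfl⟩
    · rintro ⟨k, ⟨hk, hkT⟩, rfl⟩
      obtain ⟨e⟩ := h.nonempty_ext_equiv hk
      exact e.toEquiv.subsingleton_congr.not.1 hkT
  rw [hset]
  refine ⟨(add_left_mono (a := n)).map_isLeast, ?_⟩
  rintro ⟨⟨k, hk, hkt⟩, hmin⟩
  obtain rfl := Nat.add_right_cancel hkt
  exact ⟨hk, fun i hi ↦ Nat.le_of_add_le_add_right (hmin ⟨i, hi, rfl⟩)⟩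

theorem IsGCPerfectOfDim.dual_zero (h : IsGCPerfectOfDim C E 0) (e : E' ≃ₗ[R] ExtM R E C 0) :
    IsGCPerfectOfDim C E' 0 := by
  obtain ⟨hE : IsTotallyCReflexive R C E, hE₀, _⟩ := h
  have := hC.finite
  let e' : E' ≃ₗ[R] cDual C E := e ≪≫ₗ ExtM.linearEquivHom E C
  let e'' : ExtM R E' C 0 ≃ₗ[R] E :=
    ExtM.congrLeft e' C 0 ≪≫ₗ ExtM.linearEquivHom (cDual C E) C ≪≫ₗ hE.bidualityEquiv.symm
  refine ⟨hE.dual.of_linearEquiv e', fun hE' ↦ hE₀ ?_, fun i _ ↦ i.zero_le⟩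
  have : Subsingleton E := e''.symm.toEquiv.subsingleton
  exact (ExtM.linearEquivHom E C).toEquiv.subsingleton

theorem IsGCPerfectOfDim.dual (h : IsGCPerfectOfDim C E n) (e : E' ≃ₗ[R] ExtM R E C n) :
    IsGCPerfectOfDim C E' n := by
  cases n with
  | zero => exact h.dual_zero hC e
  | succ n =>
    obtain ⟨hE, hE₁, hmin⟩ := h
    have := hC.finite
    have := hE.finite
    have hvan (i : ℕ) (hi : i ≤ n) : Subsingleton (ExtM R E C i) :=
      not_not.1 fun h ↦ (hmin h).not_gt (Nat.lt_succ_of_le hi)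
    have hE₀ : Subsingleton (cDual C E) :=
      have := hvan 0 n.zero_le
      (ExtM.linearEquivHom E C).symm.toEquiv.subsingleton
    obtain ⟨T, ⟨P⟩⟩ := GCPresentation.exists_of_finite (M := E) hC
    have hT : IsReducedGCPerfectOfDim C T 1 := by
      refine ⟨.of_isShortExact (P.isShortExact_dual hE₀) P.reflexive₁.dual P.reflexive₀.dual,
        ⟨one_pos, fun hT ↦ hE₁ ?_⟩, fun i hi ↦ hi.1⟩
      have : Subsingleton E := (P.symm.subsingleton_ext_one_iff.1 hT).subsingleton
      exact (IsTotallyCReflexive.of_subsingleton (C := C)).subsingleton_ext n.succ_pos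
    have hchain := P.transposeChain hC hE (fun i _ hi ↦ hvan i hi) e
    exact add_comm 1 n ▸ (hchain.isReducedGCPerfectOfDim_iff hC).1 hT

theorem GCPresentation.isReducedGCPerfectOfDim_and_isGCPerfectOfDim (P : GCPresentation C M T)
    (hM : IsReducedGCPerfectOfDim C M n) (hE : IsGCPerfectOfDim C (ExtM R M C n) (n + t - 1)) :
    IsReducedGCPerfectOfDim C T t ∧ IsGCPerfectOfDim C (ExtM R T C t) (n + t - 1) := by
  obtain ⟨hMn, ⟨hn, _⟩, hmin⟩ := hM
  obtain ⟨k, rfl⟩ := Nat.exists_eq_add_one.2 hn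
  have hchain : TransposeChain C k (ExtM R M C (k + 1)) T :=
    P.transposeChain hC hMn (fun i hi hik ↦
      not_not.1 fun h ↦ (hmin ⟨hi, h⟩).not_gt (Nat.lt_succ_of_le hik)) (.refl R _)
  have ht : 0 < t := Nat.pos_of_ne_zero fun ht ↦ hE.2.1 (hchain.subsingleton_ext (by lia))
  rw [show k + 1 + t - 1 = t + k by lia] at hE ⊢
  obtain ⟨e⟩ := hchain.nonempty_ext_equiv ht
  exact ⟨(hchain.isReducedGCPerfectOfDim_iff hC).2 hE, hE.dual hC e⟩

end Perfect

section Main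

variable {R}

theorem IsSemiperfectRing.exists_isTransposeC [IsNoetherianRing R] (hR : IsSemiperfectRing R)
    (C M : ModuleCat.{u} R) [hM : Module.Finite R M] :
    ∃ T : ModuleCat.{u} R, IsTransposeC R C M T := by
  obtain ⟨P₀, π, hP₀, hπ⟩ := hR M hM
  obtain ⟨P₁, q, hP₁, hproj, hq, hsup⟩ := hR (.of R (LinearMap.ker π))
    (inferInstanceAs (Module.Finite R (LinearMap.ker π)))
  let d : P₁ →ₗ[R] P₀ := (LinearMap.ker π).subtype ∘ₗ q
  have hrange : LinearMap.range d = LinearMap.ker π :=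
    (LinearMap.range_comp_of_range_eq_top _ (LinearMap.range_eq_top.2 hq)).trans
      (Submodule.range_subtype _)
  have hker : LinearMap.ker d = LinearMap.ker q :=
    LinearMap.ker_comp_of_ker_eq_bot _ (Submodule.ker_subtype _)
  exact ⟨.of R (cDual C P₁ ⧸ LinearMap.range (cDualMap C d)), P₁, P₀, d, π,
    ⟨hP₁, hP₀, hπ, hrange, hproj, hker ▸ hsup⟩, ⟨.refl R _⟩⟩

theorem statement13_general [IsNoetherianRing R] {C M T : ModuleCat.{u} R}
    (hC : IsSemidualizing R C) (P : GCPresentation C M T) (n t : ℕ) :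
    (IsReducedGCPerfect R C M ∧ gcdim R C M = n ∧ IsGCPerfect R C (ExtM R M C n) ∧
      gcdim R C (ExtM R M C n) = ((n + t - 1 : ℕ) : ℕ∞)) ↔
    (IsReducedGCPerfect R C T ∧ gcdim R C T = t ∧ IsGCPerfect R C (ExtM R T C t) ∧
      gcdim R C (ExtM R T C t) = ((n + t - 1 : ℕ) : ℕ∞)) := by
  have := hC.finite
  simp only [← and_assoc (b := gcdim R C _ = _), isReducedGCPerfect_and_gcdim_eq_iff,
    isGCPerfect_and_gcdim_eq_iff hC]
  refine ⟨fun h ↦ P.isReducedGCPerfectOfDim_and_isGCPerfectOfDim hC h.1 h.2, fun h ↦ ?_⟩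
  rw [add_comm n t] at h ⊢
  exact P.symm.isReducedGCPerfectOfDim_and_isGCPerfectOfDim hC h.1 h.2

end Main

/-- equivalence between: (i) `M` reduced `G_C`-perfect of dimension `n`
with `Ext_R^n(M,C)` `G_C`-perfect of dimension `n+t-1`; and (ii) the same for
`Tr_C(M)` with `t` in place of `n`. -/
theorem statement13 [IsNoetherianRing R] (hsp : IsSemiperfectRing R)
    (C : ModuleCat.{u} R) (hC : IsSemidualizing R C)
    (M : ModuleCat.{u} R) (hMfin : Module.Finite R ↥M)
    (n t : ℕ) :
    (IsReducedGCPerfect R C M ∧ gcdim R C M = n ∧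
      IsGCPerfect R C (ExtM R M C n) ∧
      gcdim R C (ExtM R M C n) = ((n + t - 1 : ℕ) : ℕ∞)) ↔
    (∀ T : ModuleCat.{u} R, IsTransposeC R C M T →
      IsReducedGCPerfect R C T ∧ gcdim R C T = t ∧
      IsGCPerfect R C (ExtM R T C t) ∧
      gcdim R C (ExtM R T C t) = ((n + t - 1 : ℕ) : ℕ∞)) := by
  have hiff (T : ModuleCat.{u} R) (hT : IsTransposeC R C M T) :=
    have ⟨P⟩ := GCPresentation.nonempty_of_isTransposeC hC hT
    statement13_general hC P n t
  obtain ⟨T, hT⟩ := hsp.exists_isTransposeC C M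
  exact ⟨fun h T hT ↦ (hiff T hT).1 h, fun h ↦ (hiff T hT).2 (h T hT)⟩

end
end

section
/- Let R be a Noetherian local ring and M a G_C-perfect R-module of grade n > 0. Then Tr_C(M) is a reduced G_C-perfect R-module of G_C-dimension 1, and the R-module Ext_R^1(Tr_C(M), C) is G_C-perfect of G_C-dimension n. -/
open CategoryTheory TensorProduct

noncomputable section

universe u

variable (R : Type u) [CommRing R]

/-!
Let `P₁ → P₀ → M → 0` be the presentation defining `T = Tr_C M`. Positive grade means
`Hom(M, R) = 0`; since `Hom(C, Hom(M, C)) ≃ Hom(M, R)` and `C` is faithful, also `Hom(M, C) = 0`.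
Hence dualizing the presentation gives an exact sequence `0 → P₀^C → P₁^C → T → 0` with totally
`C`-reflexive terms, so `T` has `G_C`-dimension at most `1`. Dualizing once more and using
biduality for `P₁` and `P₀` yields `Ext¹(T, C) ≃ M`. This is non-zero, so the `G_C`-dimension and
the reduced grade of `T` both equal `1`, and `Ext¹(T, C)` inherits `G_C`-perfection from `M`.
-/

section HomCokernel

variable {R} {A B D E K L X Y T N : Type*}
  [AddCommGroup A] [Module R A] [AddCommGroup B] [Module R B]
  [AddCommGroup D] [Module R D]
  [AddCommGroup E] [Module R E] [AddCommGroup K] [Module R K] [AddCommGroup L] [Module R L]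
  [AddCommGroup X] [Module R X] [AddCommGroup Y] [Module R Y] [AddCommGroup T] [Module R T]
  [AddCommGroup N] [Module R N]

variable (N) in
/-- The cokernel of `Hom(f, N)`. For the differential of a projective presentation of `M` it is a
transpose of `M` with respect to `N`; for the inclusion of a syzygy of `T` it is `Ext¹(T, N)`. -/
abbrev HomCokernel (f : X →ₗ[R] Y) : Type _ :=
  (X →ₗ[R] N) ⧸ LinearMap.range (LinearMap.lcomp R N f)

lemma subsingleton_homCokernel_iff {f : X →ₗ[R] Y} :
    Subsingleton (HomCokernel N f) ↔ Function.Surjective (LinearMap.lcomp R N f) := by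
  rw [Submodule.Quotient.subsingleton_iff, LinearMap.range_eq_top]

lemma lcomp_surjective_of_comp {f : X →ₗ[R] Y} {g : Y →ₗ[R] T}
    (h : Function.Surjective (LinearMap.lcomp R N (g ∘ₗ f))) :
    Function.Surjective (LinearMap.lcomp R N f) := fun a ↦
  let ⟨b, hb⟩ := h a
  ⟨b ∘ₗ g, hb⟩

lemma lcomp_injective_of_subsingleton {f : X →ₗ[R] Y} {g : Y →ₗ[R] T} (hfg : Function.Exact f g)
    (hg : Function.Surjective g) (h : Subsingleton (T →ₗ[R] N)) :
    Function.Injective (LinearMap.lcomp R N f) := by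
  rw [← LinearMap.ker_eq_bot,
    (LinearMap.exact_lcomp_of_exact_of_surjective N hfg hg).linearMap_ker_eq]
  exact LinearMap.range_eq_bot.2 (Subsingleton.elim _ _)

lemma lcomp_surjective_of_projective [Module.Projective R Y] {j : K →ₗ[R] E} {p : E →ₗ[R] Y}
    (hj : Function.Injective j) (hjp : Function.Exact j p) (hp : Function.Surjective p) :
    Function.Surjective (LinearMap.lcomp R N j) := by
  obtain ⟨r, hr⟩ := ((hjp.split_tfae'.out 0 1 rfl rfl).1
    ⟨hj, Module.projective_lifting_property p LinearMap.id hp⟩).2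
  exact fun a ↦ ⟨a ∘ₗ r, by rw [LinearMap.lcomp_apply', LinearMap.comp_assoc, hr]; rfl⟩

/-- The third isomorphism theorem, after identifying `B` with `E ⧸ ker r`. -/
def quotientRangeCompEquiv (a : A →ₗ[R] E) {r : E →ₗ[R] B} (hr : Function.Surjective r) :
    (B ⧸ LinearMap.range (r ∘ₗ a)) ≃ₗ[R] E ⧸ (LinearMap.range a ⊔ LinearMap.ker r) :=
  (Submodule.quotEquivOfEq _ _
      (by rw [LinearMap.ker_comp, Submodule.ker_mkQ, LinearMap.range_comp,
        Submodule.comap_map_eq]) ≪≫ₗ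
    ((Submodule.mkQ _ ∘ₗ r).quotKerEquivOfSurjective
      ((Submodule.mkQ_surjective _).comp hr))).symm

/-- The injection `k` identifies `E` with `ker g`, and under this identification `f'` is `f`. -/
def quotientRangeEquivOfExact {g : B →ₗ[R] D} {k : E →ₗ[R] B} (hk : Function.Injective k)
    (hkg : Function.Exact k g) {f : A →ₗ[R] LinearMap.ker g} {f' : A →ₗ[R] E}
    (hf : k ∘ₗ f' = (LinearMap.ker g).subtype ∘ₗ f) :
    (E ⧸ LinearMap.range f') ≃ₗ[R] LinearMap.ker g ⧸ LinearMap.range f :=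
  let e : E ≃ₗ[R] LinearMap.ker g :=
    LinearEquiv.ofInjective k hk ≪≫ₗ LinearEquiv.ofEq _ _ hkg.linearMap_ker_eq.symm
  have he : e.toLinearMap ∘ₗ f' = f := LinearMap.ext fun x ↦ Subtype.ext (LinearMap.congr_fun hf x)
  Submodule.Quotient.equiv _ _ e (by rw [← he, LinearMap.range_comp])

/-- Since `Hom(-, N)` is left exact, `Hom(p, N)` is the kernel of the surjection `Hom(j, N)`. -/
def homCokernelEquivOfComp {i : K →ₗ[R] X} {j : K →ₗ[R] E} {s : E →ₗ[R] X} {p : E →ₗ[R] Y}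
    (hi : s ∘ₗ j = i) (hjp : Function.Exact j p) (hp : Function.Surjective p)
    (hj : Function.Surjective (LinearMap.lcomp R N j)) :
    HomCokernel N i ≃ₗ[R]
      (E →ₗ[R] N) ⧸ (LinearMap.range (LinearMap.lcomp R N s) ⊔
        LinearMap.range (LinearMap.lcomp R N p)) :=
  have hlcomp : LinearMap.lcomp R N i = LinearMap.lcomp R N j ∘ₗ LinearMap.lcomp R N s := by
    subst hi; rfl
  have hker : LinearMap.ker (LinearMap.lcomp R N j) = LinearMap.range (LinearMap.lcomp R N p) :=
    LinearMap.exact_iff.1 (LinearMap.exact_lcomp_of_exact_of_surjective N hjp hp)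
  Submodule.quotEquivOfEq _ _ (congrArg LinearMap.range hlcomp) ≪≫ₗ
    quotientRangeCompEquiv (LinearMap.lcomp R N s) hj ≪≫ₗ
    Submodule.quotEquivOfEq _ _ (congrArg _ hker)

/-- The fibre product (pullback) of two linear maps to the same module. -/
abbrev FiberProduct (q : X →ₗ[R] T) (p : Y →ₗ[R] T) : Submodule R (X × Y) :=
  LinearMap.eqLocus (q ∘ₗ LinearMap.fst R X Y) (p ∘ₗ LinearMap.snd R X Y)

namespace FiberProduct

variable (q : X →ₗ[R] T) (p : Y →ₗ[R] T)

/-- The first projection of the fibre product. -/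
def fst : FiberProduct q p →ₗ[R] X := LinearMap.fst R X Y ∘ₗ Submodule.subtype _

/-- The second projection of the fibre product. -/
def snd : FiberProduct q p →ₗ[R] Y := LinearMap.snd R X Y ∘ₗ Submodule.subtype _

variable {q p}

/-- The copy of `ker q` in the fibre product, for `ker q` presented as the image of `i`. -/
def inl {i : K →ₗ[R] X} (hiq : Function.Exact i q) (p : Y →ₗ[R] T) : K →ₗ[R] FiberProduct q p :=
  (LinearMap.inl R X Y ∘ₗ i).codRestrict _ fun k ↦ by simp [hiq.apply_apply_eq_zero]

/-- The copy of `ker p` in the fibre product, for `ker p` presented as the image of `l`. -/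
def inr {l : L →ₗ[R] Y} (q : X →ₗ[R] T) (hlp : Function.Exact l p) : L →ₗ[R] FiberProduct q p :=
  (LinearMap.inr R X Y ∘ₗ l).codRestrict _ fun k ↦ by simp [hlp.apply_apply_eq_zero]

lemma fst_surjective (hp : Function.Surjective p) : Function.Surjective (fst q p) := fun x ↦
  let ⟨y, hy⟩ := hp (q x)
  ⟨⟨(x, y), hy.symm⟩, rfl⟩

lemma snd_surjective (hq : Function.Surjective q) : Function.Surjective (snd q p) := fun y ↦
  let ⟨x, hx⟩ := hq (p y)
  ⟨⟨(x, y), hx⟩, rfl⟩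

lemma inl_injective {i : K →ₗ[R] X} (hi : Function.Injective i) (hiq : Function.Exact i q) :
    Function.Injective (inl hiq p) :=
  Function.Injective.of_comp (f := fst q p) hi

lemma inr_injective {l : L →ₗ[R] Y} (hl : Function.Injective l) (hlp : Function.Exact l p) :
    Function.Injective (inr q hlp) :=
  Function.Injective.of_comp (f := snd q p) hl

lemma exact_inl_snd {i : K →ₗ[R] X} (hiq : Function.Exact i q) :
    Function.Exact (inl hiq p) (snd q p) := by
  rintro ⟨⟨x, y⟩, hxy⟩
  refine ⟨fun hy : y = 0 ↦ ?_, ?_⟩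
  · obtain ⟨k, rfl⟩ := (hiq x).1 (by simpa [hy] using hxy)
    exact ⟨k, Subtype.ext (Prod.ext rfl hy.symm)⟩
  · rintro ⟨k, hk⟩
    exact (congrArg (snd q p) hk).symm

lemma exact_inr_fst {l : L →ₗ[R] Y} (hlp : Function.Exact l p) :
    Function.Exact (inr q hlp) (fst q p) := by
  rintro ⟨⟨x, y⟩, hxy⟩
  refine ⟨fun hx : x = 0 ↦ ?_, ?_⟩
  · obtain ⟨k, rfl⟩ := (hlp y).1 (by simpa [hx] using hxy.symm)
    exact ⟨k, Subtype.ext (Prod.ext hx.symm rfl)⟩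
  · rintro ⟨k, hk⟩
    exact (congrArg (fst q p) hk).symm

lemma lcomp_inl_surjective [Module.Projective R Y] {i : K →ₗ[R] X} (hi : Function.Injective i)
    (hiq : Function.Exact i q) (hq : Function.Surjective q) :
    Function.Surjective (LinearMap.lcomp R N (inl hiq p)) :=
  lcomp_surjective_of_projective (inl_injective hi hiq) (exact_inl_snd hiq) (snd_surjective hq)

end FiberProduct

/-- With `E` the fibre product, both sides are the quotient of `Hom(E, N)` by the sum of the
images of `Hom(X, N)` and `Hom(Y, N)`. -/
def homCokernelEquiv {i : K →ₗ[R] X} {q : X →ₗ[R] T} {l : L →ₗ[R] Y} {p : Y →ₗ[R] T}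
    (hiq : Function.Exact i q) (hq : Function.Surjective q)
    (hlp : Function.Exact l p) (hp : Function.Surjective p)
    (hinl : Function.Surjective (LinearMap.lcomp R N (FiberProduct.inl hiq p)))
    (hinr : Function.Surjective (LinearMap.lcomp R N (FiberProduct.inr q hlp))) :
    HomCokernel N i ≃ₗ[R] HomCokernel N l :=
  homCokernelEquivOfComp (s := FiberProduct.fst q p) rfl (FiberProduct.exact_inl_snd hiq)
      (FiberProduct.snd_surjective hq) hinl ≪≫ₗ
    Submodule.quotEquivOfEq _ _ (sup_comm _ _) ≪≫ₗ
    (homCokernelEquivOfComp (s := FiberProduct.snd q p) rfl (FiberProduct.exact_inr_fst hlp)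
      (FiberProduct.fst_surjective hp) hinr).symm

lemma lcomp_surjective_of_syzygy [Module.Projective R Y] {l : L →ₗ[R] Y} {p : Y →ₗ[R] T}
    (hlp : Function.Exact l p) (hp : Function.Surjective p)
    (hl : Function.Surjective (LinearMap.lcomp R N l)) {i : K →ₗ[R] X} {q : X →ₗ[R] T}
    (hi : Function.Injective i) (hiq : Function.Exact i q) (hq : Function.Surjective q) :
    Function.Surjective (LinearMap.lcomp R N i) := by
  have hinl : Function.Surjective (LinearMap.lcomp R N (FiberProduct.inl hiq p)) :=
    FiberProduct.lcomp_inl_surjective hi hiq hq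
  have hinr : Function.Surjective (LinearMap.lcomp R N (FiberProduct.inr q hlp)) :=
    lcomp_surjective_of_comp (g := FiberProduct.snd q p) hl
  rw [← subsingleton_homCokernel_iff,
    (homCokernelEquiv hiq hq hlp hp hinl hinr).subsingleton_congr, subsingleton_homCokernel_iff]
  exact hl

end HomCokernel

section Ext

variable {R}

section Additive

variable {𝒜 ℬ : Type*} [Category* 𝒜] [Abelian 𝒜] [HasProjectiveResolutions 𝒜]
  [Category* ℬ] [Abelian ℬ]

lemma additive_leftDerived (F : 𝒜 ⥤ ℬ) [F.Additive] (n : ℕ) : (F.leftDerived n).Additive where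
  map_add {X Y f g} := by
    let P := projectiveResolution X
    let Q := projectiveResolution Y
    let liftPQ (h : X ⟶ Y) := ProjectiveResolution.lift h P Q
    have liftPQ_π (h : X ⟶ Y) : liftPQ h ≫ Q.π = P.π ≫ (ChainComplex.single₀ 𝒜).map h :=
      ProjectiveResolution.lift_commutes h P Q
    have hsum : (liftPQ f + liftPQ g) ≫ Q.π = P.π ≫ (ChainComplex.single₀ 𝒜).map (f + g) := by
      rw [Preadditive.add_comp, liftPQ_π, liftPQ_π, Functor.map_add, Preadditive.comp_add]
    rw [F.leftDerived_map_eq n f _ (liftPQ_π f), F.leftDerived_map_eq n g _ (liftPQ_π g),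
      F.leftDerived_map_eq n (f + g) _ hsum, Functor.map_add, Preadditive.add_comp,
      Preadditive.comp_add]

lemma isZero_obj_of_sum_comp_eq_id {𝒞 𝒟 : Type*} [Category* 𝒞] [Preadditive 𝒞] [Category* 𝒟]
    [Preadditive 𝒟] (F : 𝒞 ⥤ 𝒟) [F.Additive] {X Y : 𝒞} {ι : Type*} {s : Finset ι}
    {a : ι → (X ⟶ Y)} {b : ι → (Y ⟶ X)} (h : ∑ j ∈ s, a j ≫ b j = 𝟙 X)
    (hY : Limits.IsZero (F.obj Y)) : Limits.IsZero (F.obj X) := by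
  have hab (j : ι) : F.map (a j ≫ b j) = 0 := by
    rw [F.map_comp, hY.eq_of_tgt (F.map (a j)) 0, Limits.zero_comp]
  rw [Limits.IsZero.iff_id_eq_zero, ← F.map_id, ← h, Functor.map_sum]
  exact Finset.sum_eq_zero fun j _ ↦ hab j

end Additive

variable {N T X : ModuleCat.{u} R}

lemma extM_subsingleton_of_sum_comp_eq_id {Y : ModuleCat.{u} R} {i : ℕ} {ι : Type*} {s : Finset ι}
    {a : ι → (X ⟶ Y)} {b : ι → (Y ⟶ X)} (h : ∑ j ∈ s, a j ≫ b j = 𝟙 X)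
    (hY : Subsingleton (ExtM R Y N i)) : Subsingleton (ExtM R X N i) := by
  let F := ((linearYoneda R (ModuleCat.{u} R)).obj N).rightOp.leftDerived i
  have : F.Additive := additive_leftDerived _ i
  have hFY : Limits.IsZero (ExtM R Y N i) := ModuleCat.isZero_of_subsingleton _
  exact ModuleCat.subsingleton_of_isZero (isZero_obj_of_sum_comp_eq_id F h hFY.op).unop

/-- `Ext^i(-, N)` is contravariant, so the isomorphism is induced by the inverse of `e`. -/
def extMCongr {Y : ModuleCat.{u} R} (e : X ≃ₗ[R] Y) (N : ModuleCat.{u} R) (i : ℕ) :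
    ExtM R X N i ≃ₗ[R] ExtM R Y N i :=
  (((Ext R (ModuleCat.{u} R) i).mapIso e.symm.toModuleIso.op).app N).toLinearEquiv

lemma extM_subsingleton_of_projective [Module.Projective R X] {i : ℕ} (hi : 0 < i) :
    Subsingleton (ExtM R X N i) := by
  obtain ⟨k, rfl⟩ := Nat.exists_eq_succ_of_ne_zero hi.ne'
  have : Projective X := (IsProjective.iff_projective (P := X)).1 inferInstance
  exact ModuleCat.subsingleton_of_isZero (isZero_Ext_succ_of_projective X N k)

lemma subsingleton_linearMap_of_extM_zero (h : Subsingleton (ExtM R X N 0)) :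
    Subsingleton (X →ₗ[R] N) := by
  let P := projectiveResolution X
  let K := P.complex.linearYonedaObj R N
  have hK : Limits.IsZero (K.homology 0) :=
    .of_iso (ModuleCat.isZero_of_subsingleton (ExtM R X N 0)) (P.isoExt 0 N).symm
  rw [← HomologicalComplex.exactAt_iff_isZero_homology,
    HomologicalComplex.exactAt_iff' _ 0 0 1 (by simp) (by simp),
    ShortComplex.exact_iff_mono _ (K.shape 0 0 (by simp)), ModuleCat.mono_iff_injective] at hK
  let π₀ : P.complex.X 0 ⟶ X := P.π.f 0
  have : Epi π₀ := inferInstanceAs (Epi (P.π.f 0))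
  have hdπ₀ : P.complex.d 1 0 ≫ π₀ = 0 := P.complex_d_comp_π_f_zero
  refine subsingleton_of_forall_eq 0 fun f ↦ ?_
  have hdf : P.complex.d 1 0 ≫ π₀ ≫ ModuleCat.ofHom f = 0 := by
    rw [← Category.assoc, hdπ₀, Limits.zero_comp]
  have hf : π₀ ≫ ModuleCat.ofHom f = 0 := hK (hdf.trans (map_zero (K.d 0 1).hom).symm)
  exact congrArg ModuleCat.Hom.hom ((cancel_epi π₀).1 (hf.trans Limits.comp_zero.symm))

/-- Dimension shifting. Left exactness of `Hom(-, N)` identifies the `1`-cocycles of the resolution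
with `Hom(Ω, N)`, for `Ω` the first syzygy of `T`. -/
def extMOneEquiv (P : ProjectiveResolution T) (N : ModuleCat.{u} R) :
    ExtM R T N 1 ≃ₗ[R] HomCokernel N (LinearMap.ker (P.π.f 0).hom).subtype :=
  let K := P.complex.linearYonedaObj R N
  let S := K.sc' 0 1 2
  let e : ExtM R T N 1 ≅ S.moduleCatLeftHomologyData.H :=
    P.isoExt 1 N ≪≫ ShortComplex.homologyMapIso (K.isoSc' 0 1 2 (by simp) (by simp)) ≪≫
      S.moduleCatHomologyIso
  let Ω := LinearMap.ker (P.π.f 0).hom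
  let ρ : P.complex.X 1 →ₗ[R] Ω := (P.complex.d 1 0).hom.codRestrict Ω fun x ↦
    P.exact₀.moduleCat_range_eq_ker.le ⟨x, rfl⟩
  let cocycle : (Ω →ₗ[R] N) →ₗ[R] (P.complex.X 1 ⟶ N) :=
    (ModuleCat.homLinearEquiv (S := R)).symm.toLinearMap ∘ₗ LinearMap.lcomp R N ρ
  let restrict : (P.complex.X 0 ⟶ N) →ₗ[R] (Ω →ₗ[R] N) :=
    LinearMap.lcomp R N Ω.subtype ∘ₗ (ModuleCat.homLinearEquiv (S := R)).toLinearMap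
  have hρ : Function.Surjective ρ := fun y ↦
    let ⟨x, hx⟩ := P.exact₀.moduleCat_range_eq_ker.ge y.2
    ⟨x, Subtype.ext hx⟩
  have hdρ : Function.Exact (P.complex.d 2 1).hom ρ := fun x ↦ Subtype.ext_iff.trans
    ((ShortComplex.ShortExact.moduleCat_exact_iff_function_exact _).1 (P.exact_succ 0) x)
  have hcocycle : Function.Injective cocycle :=
    (ModuleCat.homLinearEquiv (S := R)).symm.injective.comp
      (LinearMap.lcomp_injective_of_surjective ρ hρ)
  have hexact : Function.Exact cocycle S.g.hom := fun a ↦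
    (ModuleCat.hom_ext_iff (f := S.g.hom a) (g := 0)).trans <|
      (LinearMap.exact_lcomp_of_exact_of_surjective N hdρ hρ a.hom).trans <|
        exists_congr fun b ↦ (ModuleCat.hom_ext_iff (f := cocycle b) (g := a)).symm
  have hcobound : cocycle ∘ₗ restrict =
      (LinearMap.ker S.g.hom).subtype ∘ₗ S.moduleCatToCycles := rfl
  e.toLinearEquiv ≪≫ₗ (quotientRangeEquivOfExact hcocycle hexact hcobound).symm ≪≫ₗ
    Submodule.quotEquivOfEq _ _ (LinearEquiv.range_comp _ _)

lemma surjective_π_f_zero (P : ProjectiveResolution T) :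
    Function.Surjective (P.π.f 0).hom :=
  (ModuleCat.epi_iff_surjective _).1 inferInstance

instance projective_complex_X (P : ProjectiveResolution T) (n : ℕ) :
    Module.Projective R (P.complex.X n) :=
  (IsProjective.iff_projective (P := P.complex.X n)).2 (P.projective n)

lemma lcomp_surjective_of_subsingleton_extM_one (h : Subsingleton (ExtM R X N 1)) {K E : Type*}
    [AddCommGroup K] [Module R K] [AddCommGroup E] [Module R E] {i : K →ₗ[R] E} {q : E →ₗ[R] X}
    (hi : Function.Injective i) (hiq : Function.Exact i q) (hq : Function.Surjective q) :
    Function.Surjective (LinearMap.lcomp R N i) := by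
  let P := projectiveResolution X
  have hΩ := subsingleton_homCokernel_iff.1 <| (extMOneEquiv P N).subsingleton_congr.1 h
  exact lcomp_surjective_of_syzygy (LinearMap.exact_subtype_ker_map _) (surjective_π_f_zero P) hΩ
    hi hiq hq

/-- Dimension shifting along a module `X` that need not be projective: the fibre product of `X` with
a projective module mapping onto `T` compares the two syzygies. -/
def extMOneEquivOfExact (h : Subsingleton (ExtM R X N 1)) {K : Type*} [AddCommGroup K]
    [Module R K] {i : K →ₗ[R] X} {q : X →ₗ[R] T} (hi : Function.Injective i)
    (hiq : Function.Exact i q) (hq : Function.Surjective q) :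
    ExtM R T N 1 ≃ₗ[R] HomCokernel N i :=
  let P := projectiveResolution T
  let π₀ : P.complex.X 0 →ₗ[R] T := (P.π.f 0).hom
  have hπ₀ : Function.Surjective π₀ := surjective_π_f_zero P
  have hΩ : Function.Exact (LinearMap.ker π₀).subtype π₀ := LinearMap.exact_subtype_ker_map π₀
  have hinl : Function.Surjective (LinearMap.lcomp R N (FiberProduct.inl hiq π₀)) :=
    FiberProduct.lcomp_inl_surjective hi hiq hq
  have hinr : Function.Surjective (LinearMap.lcomp R N (FiberProduct.inr q hΩ)) :=
    lcomp_surjective_of_subsingleton_extM_one h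
      (FiberProduct.inr_injective Subtype.val_injective hΩ)
      (FiberProduct.exact_inr_fst hΩ) (FiberProduct.fst_surjective hπ₀)
  extMOneEquiv P N ≪≫ₗ (homCokernelEquiv hiq hq hΩ hπ₀ hinl hinr).symm

end Ext

section GCDimension

variable {R} {C M M' : ModuleCat.{u} R}

/-- The `C`-dual `M^C`. -/
abbrev CDual (C M : ModuleCat.{u} R) : ModuleCat.{u} R := ModuleCat.of R (M →ₗ[R] C)

lemma bijective_bidualityMap_of_linearEquiv (e : M ≃ₗ[R] M')
    (h : Function.Bijective (bidualityMap R C M)) : Function.Bijective (bidualityMap R C M') := by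
  let eDual : (M →ₗ[R] C) ≃ₗ[R] (M' →ₗ[R] C) := e.congrLeft C R
  let eBidual : ((M →ₗ[R] C) →ₗ[R] C) ≃ₗ[R] ((M' →ₗ[R] C) →ₗ[R] C) := eDual.congrLeft C R
  have naturality : bidualityMap R C M' = eBidual ∘ bidualityMap R C M ∘ e.symm :=
    funext fun x ↦ LinearMap.ext fun f ↦ congrArg f (e.apply_symm_apply x).symm
  exact naturality ▸ eBidual.bijective.comp (h.comp e.symm.bijective)

lemma bijective_bidualityMap_cDual (h : Function.Bijective (bidualityMap R C M)) :
    Function.Bijective (bidualityMap R C (CDual C M)) := by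
  let δ : M ≃ₗ[R] ((M →ₗ[R] C) →ₗ[R] C) := .ofBijective _ h
  have triangle : δ.symm.congrLeft C R ∘ bidualityMap R C (CDual C M) = id := rfl
  exact (Function.Bijective.of_comp_iff' (δ.symm.congrLeft C R).bijective _).1
    (triangle ▸ Function.bijective_id)

lemma IsTotallyCReflexive.of_linearEquiv_s14 (e : M ≃ₗ[R] M') (h : IsTotallyCReflexive R C M) :
    IsTotallyCReflexive R C M' :=
  have ⟨_, hbid, hext, hext'⟩ := h
  ⟨Module.Finite.equiv e, bijective_bidualityMap_of_linearEquiv e hbid,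
    fun i hi ↦ (extMCongr e C i).subsingleton_congr.1 (hext i hi),
    fun i hi ↦ (extMCongr (e.congrLeft C R) C i).subsingleton_congr.1 (hext' i hi)⟩

lemma gcdimLE.of_linearEquiv_s14 {n : ℕ} (e : M ≃ₗ[R] M') (h : gcdimLE R C n M) :
    gcdimLE R C n M' := by
  cases n with
  | zero => exact IsTotallyCReflexive.of_linearEquiv_s14 e h
  | succ n =>
    obtain ⟨X, K, f, g, hf, hg, hfg, hX, hK⟩ := h
    exact ⟨X, K, f, e.toLinearMap ∘ₗ g, hf, e.surjective.comp hg, by rw [e.ker_comp, hfg], hX, hK⟩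

lemma gcdim_congr (e : M ≃ₗ[R] M') : gcdim R C M = gcdim R C M' := by
  have (n : ℕ) : gcdimLE R C n M ↔ gcdimLE R C n M' := ⟨.of_linearEquiv e, .of_linearEquiv e.symm⟩
  simp only [gcdim, this]

lemma gradeR_congr (e : M ≃ₗ[R] M') : gradeR R M = gradeR R M' := by
  simp only [gradeR, fun i ↦ (extMCongr e (ModuleCat.of R R) i).subsingleton_congr]

lemma IsGCPerfect.of_linearEquiv_s14 (e : M ≃ₗ[R] M') (h : IsGCPerfect R C M) :
    IsGCPerfect R C M' := by
  rwa [IsGCPerfect, ← gcdim_congr e, ← gradeR_congr e]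

lemma exists_dual_basis (P : Type*) [AddCommGroup P] [Module R P] [Module.Finite R P]
    [Module.Projective R P] :
    ∃ (n : ℕ) (b : Fin n → P) (φ : Fin n → P →ₗ[R] R), ∀ x, ∑ j, φ j x • b j = x := by
  obtain ⟨n, f, g, -, -, hfg⟩ := Module.Finite.exists_comp_eq_id_of_projective R P
  refine ⟨n, fun i ↦ f fun j ↦ if i = j then 1 else 0, fun i ↦ LinearMap.proj i ∘ₗ g, fun x ↦ ?_⟩
  exact (f.pi_apply_eq_sum_univ (g x)).symm.trans (LinearMap.congr_fun hfg x)

lemma sum_smulRight_dual_basis {P N ι : Type*} [AddCommGroup P] [Module R P] [AddCommGroup N]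
    [Module R N] [Fintype ι] {b : ι → P} {φ : ι → P →ₗ[R] R} (hbφ : ∀ x, ∑ j, φ j x • b j = x)
    (f : P →ₗ[R] N) : ∑ j, (φ j).smulRight (f (b j)) = f := by
  ext x
  conv_rhs => rw [← hbφ x]
  simp

section FiniteProjective

variable {P : ModuleCat.{u} R} [Module.Finite R P] [Module.Projective R P]

lemma bijective_bidualityMap_of_projective (hC : Function.Bijective (LinearMap.lsmul R C)) :
    Function.Bijective (bidualityMap R C P) := by
  obtain ⟨n, b, φ, hbφ⟩ := exists_dual_basis (R := R) P
  constructor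
  · rw [injective_iff_map_eq_zero]
    intro x hx
    have hφx (j) : φ j x = 0 := (injective_iff_map_eq_zero _).1 hC.1 _ <|
      LinearMap.ext fun c ↦ LinearMap.congr_fun hx ((φ j).smulRight c)
    rw [← hbφ x]
    exact Finset.sum_eq_zero fun j _ ↦ by rw [hφx, zero_smul]
  · intro Φ
    choose r hr using fun j ↦ hC.2 (Φ ∘ₗ LinearMap.smulRightₗ (φ j))
    have hΦ (j) (c : C) : Φ ((φ j).smulRight c) = r j • c := (LinearMap.congr_fun (hr j) c).symm
    refine ⟨∑ j, r j • b j, LinearMap.ext fun f ↦ ?_⟩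
    calc f (∑ j, r j • b j) = ∑ j, Φ ((φ j).smulRight (f (b j))) := by simp [hΦ]
      _ = Φ f := by rw [← map_sum, sum_smulRight_dual_basis hbφ]

lemma extM_cDual_subsingleton_of_projective {i : ℕ} (h : Subsingleton (ExtM R C C i)) :
    Subsingleton (ExtM R (CDual C P) C i) := by
  obtain ⟨n, b, φ, hbφ⟩ := exists_dual_basis (R := R) P
  refine extM_subsingleton_of_sum_comp_eq_id (s := Finset.univ)
    (a := fun j ↦ ModuleCat.ofHom (X := CDual C P) (LinearMap.applyₗ (b j)))
    (b := fun j ↦ ModuleCat.ofHom (LinearMap.smulRightₗ (φ j))) ?_ h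
  ext1
  refine LinearMap.ext fun f ↦ .trans ?_ (sum_smulRight_dual_basis hbφ f)
  simp only [ModuleCat.hom_sum, LinearMap.sum_apply]
  rfl

theorem isTotallyCReflexive_cDual [IsNoetherianRing R] (hC : IsSemidualizing R C) :
    IsTotallyCReflexive R C (CDual C P) := by
  obtain ⟨_, hhom, hext⟩ := hC
  have hbid : Function.Bijective (bidualityMap R C P) := bijective_bidualityMap_of_projective hhom
  refine ⟨inferInstanceAs (Module.Finite R (P →ₗ[R] C)), bijective_bidualityMap_cDual hbid,
    fun i hi ↦ extM_cDual_subsingleton_of_projective (hext i hi), fun i hi ↦ ?_⟩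
  exact (extMCongr (.ofBijective _ hbid) C i).subsingleton_congr.1
    (extM_subsingleton_of_projective hi)

end FiniteProjective

/-- By symmetry `Hom(C, Hom(M, C)) ≃ Hom(M, Hom(C, C)) ≃ Hom(M, R)`, and over a Noetherian ring
`Hom(C, N) = 0` for finite `C` forces the annihilator of `C`, here zero, to contain an `N`-regular
element. -/
theorem subsingleton_linearMap_of_isSemidualizing [IsNoetherianRing R] [Module.Finite R M]
    (hC : IsSemidualizing R C) (h : Subsingleton (M →ₗ[R] R)) : Subsingleton (M →ₗ[R] C) := by
  obtain ⟨_, hhom, -⟩ := hC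
  let homothety : R ≃ₗ[R] (C →ₗ[R] C) := .ofBijective (LinearMap.lsmul R C) hhom
  have : Subsingleton (C →ₗ[R] M →ₗ[R] C) :=
    (LinearMap.lflip ≪≫ₗ homothety.symm.congrRight :
      (C →ₗ[R] M →ₗ[R] C) ≃ₗ[R] (M →ₗ[R] R)).subsingleton
  obtain ⟨r, hr, hreg⟩ := IsSMulRegular.subsingleton_linearMap_iff.1 this
  have hr0 : r = 0 := (injective_iff_map_eq_zero homothety).1 homothety.injective _ <|
    LinearMap.ext (Module.mem_annihilator.1 hr)
  exact IsSMulRegular.zero_iff_subsingleton.1 (hr0 ▸ hreg)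

lemma subsingleton_linearMap_of_gradeR_pos (h : 0 < gradeR R M) : Subsingleton (M →ₗ[R] R) := by
  by_contra hM
  have hExt : ¬ Subsingleton (ExtM R M (ModuleCat.of R R) 0) :=
    mt subsingleton_linearMap_of_extM_zero hM
  exact h.not_ge (sInf_le ⟨0, hExt, rfl⟩)

lemma not_subsingleton_extM_of_gradeR_eq {n : ℕ} (h : gradeR R M = n) :
    ¬ Subsingleton (ExtM R M (ModuleCat.of R R) n) := by
  have hne : {i | ¬ Subsingleton (ExtM R M (ModuleCat.of R R) i)}.Nonempty := by
    by_contra hempty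
    rw [gradeR, Set.not_nonempty_iff_eq_empty.1 hempty, Set.image_empty, sInf_empty] at h
    exact ENat.top_ne_natCast n h
  obtain ⟨i, hi, hin⟩ := csInf_mem (hne.image fun i : ℕ ↦ (i : ℕ∞))
  rwa [← Nat.cast_injective (hin.trans h)]

lemma not_subsingleton_of_gradeR_eq {n : ℕ} (hn : 0 < n) (h : gradeR R M = n) :
    ¬ Subsingleton M := fun _ ↦
  not_subsingleton_extM_of_gradeR_eq h (extM_subsingleton_of_projective hn)

lemma gcdim_eq_one (h : gcdimLE R C 1 M) (hM : ¬ Subsingleton (ExtM R M C 1)) :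
    gcdim R C M = 1 := by
  refine le_antisymm (sInf_le ⟨1, h, rfl⟩) (le_sInf ?_)
  rintro _ ⟨_ | k, hk : gcdimLE R C _ M, rfl⟩
  · exact absurd (hk.2.2.1 1 one_pos) hM
  · simp

lemma rgrade_eq_one (hM : ¬ Subsingleton (ExtM R M C 1)) : rgrade R C M = 1 := by
  refine le_antisymm (sInf_le ⟨1, ⟨one_pos, hM⟩, rfl⟩) (le_sInf ?_)
  rintro _ ⟨k, ⟨hk, -⟩, rfl⟩
  exact Nat.one_le_cast.2 hk

lemma isReducedGCPerfect_of_gcdimLE_one (h : gcdimLE R C 1 M)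
    (hM : ¬ Subsingleton (ExtM R M C 1)) : IsReducedGCPerfect R C M := by
  rw [IsReducedGCPerfect, rgrade_eq_one hM, gcdim_eq_one h hM]
  exact ⟨ENat.one_ne_top, rfl⟩

end GCDimension

section Transpose

variable {R} {C M T P₁ P₀ : ModuleCat.{u} R} {d : P₁ →ₗ[R] P₀} {π : P₀ →ₗ[R] M}

/-- By biduality for `P₁` and `P₀`, dualizing `d` twice gives `d` back. -/
def homCokernelLcompEquiv (h₁ : Function.Bijective (bidualityMap R C P₁))
    (h₀ : Function.Bijective (bidualityMap R C P₀)) (hdπ : Function.Exact d π)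
    (hπ : Function.Surjective π) : M ≃ₗ[R] HomCokernel C (LinearMap.lcomp R C d) :=
  let δ₀ : P₀ ≃ₗ[R] ((P₀ →ₗ[R] C) →ₗ[R] C) := .ofBijective _ h₀
  let dBidual := LinearMap.lcomp R C (LinearMap.lcomp R C d)
  have naturality : δ₀.toLinearMap ∘ₗ d = dBidual ∘ₗ bidualityMap R C P₁ := rfl
  have hrange : (LinearMap.range d).map δ₀ = LinearMap.range dBidual := by
    rw [← LinearMap.range_comp_of_range_eq_top dBidual (LinearMap.range_eq_top.2 h₁.2),
      ← naturality, LinearMap.range_comp]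
  (hdπ.linearEquivOfSurjective hπ).symm ≪≫ₗ Submodule.Quotient.equiv _ _ δ₀ hrange

variable [Module.Finite R P₁] [Module.Projective R P₁]
  [Module.Finite R P₀] [Module.Projective R P₀]

theorem gcdimLE_one_of_transpose [IsNoetherianRing R] (hC : IsSemidualizing R C)
    (hd : Function.Injective (LinearMap.lcomp R C d)) (eT : T ≃ₗ[R] HomCokernel C d) :
    gcdimLE R C 1 T :=
  ⟨CDual C P₁, CDual C P₀, LinearMap.lcomp R C d, eT.symm.toLinearMap ∘ₗ Submodule.mkQ _, hd,
    eT.symm.surjective.comp (Submodule.mkQ_surjective _),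
    by rw [LinearEquiv.ker_comp, Submodule.ker_mkQ],
    isTotallyCReflexive_cDual hC, isTotallyCReflexive_cDual hC⟩

/-- As `Ext¹(P₁^C, C) = 0`, the sequence `0 → P₀^C → P₁^C → T → 0` presents `Ext¹(T, C)` as the
cokernel of `P₁^CC → P₀^CC`, which is `d` by biduality. -/
def extMOneTransposeEquiv (hC : IsSemidualizing R C) (hdπ : Function.Exact d π)
    (hπ : Function.Surjective π) (hd : Function.Injective (LinearMap.lcomp R C d))
    (eT : T ≃ₗ[R] HomCokernel C d) : M ≃ₗ[R] ExtM R T C 1 :=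
  have hP₁ : Subsingleton (ExtM R (CDual C P₁) C 1) :=
    extM_cDual_subsingleton_of_projective (hC.2.2 1 one_pos)
  homCokernelLcompEquiv (bijective_bidualityMap_of_projective hC.2.1)
      (bijective_bidualityMap_of_projective hC.2.1) hdπ hπ ≪≫ₗ
    (extMOneEquivOfExact (T := ModuleCat.of R (HomCokernel C d)) (X := CDual C P₁) hP₁ hd
      (LinearMap.exact_map_mkQ_range _) (Submodule.mkQ_surjective _)).symm ≪≫ₗ
    extMCongr eT.symm C 1

end Transpose

theorem statement14_general [IsNoetherianRing R] {C M T P₁ P₀ : ModuleCat.{u} R}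
    [Module.Finite R P₁] [Module.Projective R P₁] [Module.Finite R P₀] [Module.Projective R P₀]
    {d : P₁ →ₗ[R] P₀} {π : P₀ →ₗ[R] M} (hdπ : Function.Exact d π) (hπ : Function.Surjective π)
    (eT : T ≃ₗ[R] HomCokernel C d) (hC : IsSemidualizing R C) {n : ℕ} (hn : 0 < n)
    (hperf : IsGCPerfect R C M) (hgr : gradeR R M = n) :
    IsReducedGCPerfect R C T ∧ gcdim R C T = 1 ∧
      IsGCPerfect R C (ExtM R T C 1) ∧ gcdim R C (ExtM R T C 1) = n := by
  have : Module.Finite R M := .of_surjective π hπ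
  have hMR : Subsingleton (M →ₗ[R] R) :=
    subsingleton_linearMap_of_gradeR_pos (hgr ▸ Nat.cast_pos.2 hn)
  have hMC : Subsingleton (M →ₗ[R] C) := subsingleton_linearMap_of_isSemidualizing hC hMR
  have hd : Function.Injective (LinearMap.lcomp R C d) :=
    lcomp_injective_of_subsingleton hdπ hπ hMC
  have hT : gcdimLE R C 1 T := gcdimLE_one_of_transpose hC hd eT
  let e : M ≃ₗ[R] ExtM R T C 1 := extMOneTransposeEquiv hC hdπ hπ hd eT
  have hExt : ¬ Subsingleton (ExtM R T C 1) :=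
    mt e.subsingleton_congr.2 (not_subsingleton_of_gradeR_eq hn hgr)
  exact ⟨isReducedGCPerfect_of_gcdimLE_one hT hExt, gcdim_eq_one hT hExt, hperf.of_linearEquiv_s14 e,
    by rw [← gcdim_congr e, ← hperf.2, hgr]⟩

/-- over a Noetherian local ring, if `M` is `G_C`-perfect of grade
`n > 0`, then `Tr_C(M)` is reduced `G_C`-perfect of `G_C`-dimension `1`, and
`Ext_R^1(Tr_C(M), C)` is `G_C`-perfect of `G_C`-dimension `n`. -/
theorem statement14 [IsLocalRing R] [IsNoetherianRing R]
    (C : ModuleCat.{u} R) (hC : IsSemidualizing R C)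
    (M : ModuleCat.{u} R) (hMfin : Module.Finite R ↥M)
    (n : ℕ) (hn : 0 < n)
    (hperf : IsGCPerfect R C M) (hgr : gradeR R M = n) :
    ∀ T : ModuleCat.{u} R, IsTransposeC R C M T →
      IsReducedGCPerfect R C T ∧ gcdim R C T = 1 ∧
      IsGCPerfect R C (ExtM R T C 1) ∧ gcdim R C (ExtM R T C 1) = n := by
  rintro T ⟨P₁, P₀, d, π, ⟨_, _, ⟨_, hπ, -⟩, hdπ, _, -⟩, ⟨eT⟩⟩
  exact statement14_general R (LinearMap.exact_iff.2 hdπ.symm) hπ eT hC hn hperf hgr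

end
end

section
/- If M is a non-zero horizontally linked R-module, then grade_R(M) = 0. -/
open CategoryTheory TensorProduct

noncomputable section

universe u

variable (R : Type u) [CommRing R]

/-!
By construction `λλM` is a syzygy, so a horizontally linked module embeds into a projective
module. Linear forms separate the points of a projective module, so a non-zero module with such an
embedding has a non-zero linear form, and `Ext⁰(M, R) ≃ Hom(M, R)` does not vanish.
-/

section ExtZero

open Limits

variable {R} {𝒜 : Type*} [Category* 𝒜]

theorem preservesLimits_linearYoneda_obj [Preadditive 𝒜] [Linear R 𝒜] (Y : 𝒜) :
    PreservesLimits ((linearYoneda R 𝒜).obj Y) :=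
  have : PreservesLimits ((linearYoneda R 𝒜).obj Y ⋙ forget (ModuleCat R)) :=
    inferInstanceAs (PreservesLimits (yoneda.obj Y))
  preservesLimits_of_reflects_of_preserves _ (forget (ModuleCat R))

/-- `Ext⁰(X, Y) ≃ Hom(X, Y)`: the contravariant functor `Hom(-, Y)` is left exact, hence agrees
with its zeroth derived functor. -/
def extZeroLinearEquiv [Abelian 𝒜] [Linear R 𝒜] [EnoughProjectives 𝒜] (X Y : 𝒜) :
    ((Ext R 𝒜 0).obj (Opposite.op X)).obj Y ≃ₗ[R] (X ⟶ Y) :=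
  let F := (linearYoneda R 𝒜).obj Y
  have : PreservesLimits F := preservesLimits_linearYoneda_obj Y
  have : PreservesFiniteColimits F.rightOp := preservesFiniteColimits_rightOp F
  (F.rightOp.leftDerivedZeroIsoSelf.app X).unop.symm.toLinearEquiv

end ExtZero

theorem nontrivial_dual_of_injective {A M P : Type*} [Semiring A] [AddCommMonoid M] [Module A M]
    [Nontrivial M] [AddCommMonoid P] [Module A P] [Module.Projective A P] (f : M →ₗ[A] P)
    (hf : Function.Injective f) : Nontrivial (Module.Dual A M) := by
  obtain ⟨m, hm⟩ := exists_ne (0 : M)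
  obtain ⟨φ, hφ⟩ := Module.Projective.exists_dual_ne_zero A ((map_ne_zero_iff f hf).2 hm)
  exact nontrivial_of_ne (φ ∘ₗ f) 0 fun h ↦ hφ (LinearMap.congr_fun h m)

section Grade

variable {R}

theorem gradeR_eq_zero_iff_nontrivial_dual (M : ModuleCat.{u} R) :
    gradeR R M = 0 ↔ Nontrivial (Module.Dual R M) := by
  have e : ExtM R M (ModuleCat.of R R) 0 ≃ₗ[R] Module.Dual R M :=
    extZeroLinearEquiv M (ModuleCat.of R R) ≪≫ₗ ModuleCat.homLinearEquiv
  rw [← not_subsingleton_iff_nontrivial, ← e.subsingleton_congr]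
  simp [gradeR, ENat.sInf_eq_zero]

theorem IsSyzygyOf.exists_injective_projective {N S : ModuleCat.{u} R} (h : IsSyzygyOf R N S) :
    ∃ (P : ModuleCat.{u} R) (f : S →ₗ[R] P), Module.Projective R P ∧ Function.Injective f := by
  obtain ⟨P, π, -, ⟨hP, -, -⟩, ⟨e⟩⟩ := h
  exact ⟨P, (LinearMap.ker π).subtype ∘ₗ e.toLinearMap, hP,
    Subtype.val_injective.comp e.injective⟩

theorem IsHorizontallyLinked.exists_injective_projective {M : ModuleCat.{u} R}
    (h : IsHorizontallyLinked R M) :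
    ∃ (P : ModuleCat.{u} R) (f : M →ₗ[R] P), Module.Projective R P ∧ Function.Injective f := by
  obtain ⟨_, _, -, ⟨_, -, hsyz⟩, ⟨e⟩⟩ := h
  obtain ⟨P, f, hP, hf⟩ := hsyz.exists_injective_projective
  exact ⟨P, f ∘ₗ e.toLinearMap, hP, hf.comp e.injective⟩

theorem statement15_general {M : ModuleCat.{u} R} [Nontrivial M] {P : Type*} [AddCommGroup P]
    [Module R P] [Module.Projective R P] (f : M →ₗ[R] P) (hf : Function.Injective f) :
    gradeR R M = 0 :=
  (gradeR_eq_zero_iff_nontrivial_dual M).2 (nontrivial_dual_of_injective f hf)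

end Grade

/-- a non-zero horizontally linked module has grade `0`. -/
theorem statement15 [IsNoetherianRing R] (hsp : IsSemiperfectRing R)
    (M : ModuleCat.{u} R) (hMfin : Module.Finite R ↥M) (hM0 : Nontrivial ↥M)
    (hlink : IsHorizontallyLinked R M) :
    gradeR R M = 0 := by
  obtain ⟨P, f, hP, hf⟩ := hlink.exists_injective_projective
  exact statement15_general f hf

end
end
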